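/- Let q be an even prime power with q > 8. Then every k-cap in PG(4, q) satisfies k < q³ − q² + 2√5·q − 8 (so m₂(4, q) < q³ − q² + 2√5·q − 8). -/

import Mathlib

open Module

/-- Points of the projective space `PG(n, q)` over the field `F` (with `q = |F|`). -/
abbrev PGPoint (F : Type*) [Field F] (n : ℕ) := Projectivization F (Fin (n + 1) → F)

/-- The set of projective points lying in the projective subspace determined by
a linear subspace `W`. -/
def ptsIn {F : Type*} [Field F] {n : ℕ} (W : Submodule F (Fin (n + 1) → F)) :
    Set (PGPoint F n) := {P | P.submodule ≤ W}

/-- Three points of `PG(n, q)` are collinear if they lie on a common line. -/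
def Coll3 {F : Type*} [Field F] {n : ℕ} (P₁ P₂ P₃ : PGPoint F n) : Prop :=
  Module.finrank F ↥(P₁.submodule ⊔ P₂.submodule ⊔ P₃.submodule) ≤ 2

/-- A cap (a plane arc when `n = 2`): a set of points no three of which are collinear. -/
def IsCap {F : Type*} [Field F] {n : ℕ} (K : Set (PGPoint F n)) : Prop :=
  ∀ P₁ ∈ K, ∀ P₂ ∈ K, ∀ P₃ ∈ K, P₁ ≠ P₂ → P₁ ≠ P₃ → P₂ ≠ P₃ → ¬ Coll3 P₁ P₂ P₃

/-- A complete cap: a cap that is not contained in a cap with one more point. -/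
def IsCompleteCap {F : Type*} [Field F] {n : ℕ} (K : Set (PGPoint F n)) : Prop :=
  IsCap K ∧ ∀ P ∉ K, ¬ IsCap (insert P K)

/-- A tangent line of `K`: a line (2-dimensional linear subspace) meeting `K`
in exactly one point. -/
def IsTangent {F : Type*} [Field F] {n : ℕ} (K : Set (PGPoint F n))
    (W : Submodule F (Fin (n + 1) → F)) : Prop :=
  Module.finrank F W = 2 ∧ (ptsIn W ∩ K).ncard = 1

/-!
The heart of the proof is a plane lemma for even `q`. Let `K` be an arc of a plane and let `Q` be a
point off `K` on a secant of `K`. Then at most `q + 2 - |K|` tangents of `K` pass through `Q`: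
otherwise an alternating sum of products of determinants, which vanishes by Lagrange interpolation,
would have exactly one nonzero term. Summing over the planes through a secant on `Q` bounds the
number of tangents through `Q` plus `|K|` by `q² + q + 2` for a cap of a solid and by
`q³ + q² + q + 2` for a cap of PG(4, q).

In a solid, the planes through a tangent line then show that a complete cap with more than
`q² - q + 2` points has `q² + 1` points and meets every plane in at most one or in `q + 1` points,
like an ovoid.

A complete cap of PG(4, q) with at least `q³ - q² + 4q` points meets many solids through each of its
secants in such ovoids. This improves the bound on the number of tangents through a point off the
cap by `3q - 2`, and counting the pairs of a tangent and a point of it off the cap gives a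
contradiction. Hence `|K| < q³ - q² + 4q`, which for `q ≥ 16` is below the stated bound.
-/

namespace CapBound

section Subspaces

variable {F V : Type*} [Field F] [AddCommGroup V] [Module F V]

theorem eq_of_point_le {P Q : Submodule F V} (hP : finrank F P = 1) (hQ : finrank F Q = 1)
    (h : P ≤ Q) : P = Q :=
  haveI : FiniteDimensional F Q := .of_finrank_eq_succ hQ
  Submodule.eq_of_le_of_finrank_eq h (hP.trans hQ.symm)

variable [FiniteDimensional F V]

theorem finrank_sup_point {X P : Submodule F V} (hP : finrank F P = 1) (h : ¬P ≤ X) :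
    finrank F ↥(X ⊔ P) = finrank F X + 1 := by
  have hlt : finrank F ↥(X ⊓ P) < finrank F P :=
    Submodule.finrank_lt_finrank_of_lt (inf_le_right.lt_of_ne fun h' => h (inf_eq_right.mp h'))
  have := Submodule.finrank_sup_add_finrank_inf_eq X P
  omega

theorem finrank_sup_of_points {P Q : Submodule F V} (hP : finrank F P = 1) (hQ : finrank F Q = 1)
    (h : P ≠ Q) : finrank F ↥(P ⊔ Q) = 2 := by
  rw [finrank_sup_point hQ fun h' => h (eq_of_point_le hQ hP h').symm, hP]

theorem finrank_sup_of_points_le {P Q : Submodule F V} (hP : finrank F P = 1)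
    (hQ : finrank F Q = 1) : finrank F ↥(P ⊔ Q) ≤ 2 := by
  have := Submodule.finrank_add_le_finrank_add_finrank P Q
  omega

theorem line_eq_sup_of_points {P Q L : Submodule F V} (hP : finrank F P = 1)
    (hQ : finrank F Q = 1) (hL : finrank F L ≤ 2) (hne : P ≠ Q) (hPL : P ≤ L) (hQL : Q ≤ L) :
    P ⊔ Q = L :=
  Submodule.eq_of_le_of_finrank_le (sup_le hPL hQL) (by rwa [finrank_sup_of_points hP hQ hne])

theorem sup_point_exchange {P Q R : Submodule F V} (hP : finrank F P = 1) (hQ : finrank F Q = 1)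
    (hR : finrank F R = 1) (h : R ≤ P ⊔ Q) (hne : R ≠ Q) : R ⊔ Q = P ⊔ Q :=
  line_eq_sup_of_points hR hQ (finrank_sup_of_points_le hP hQ) hne h le_sup_right

theorem finrank_inf_add_one_of_ne {Y Z X : Submodule F V} (hY : finrank F X = finrank F Y + 1)
    (hZ : finrank F X = finrank F Z + 1) (hYX : Y ≤ X) (hZX : Z ≤ X) (hne : Y ≠ Z) :
    finrank F ↥(Y ⊓ Z) + 1 = finrank F Y := by
  have hlt : finrank F Y < finrank F ↥(Y ⊔ Z) := by
    refine Submodule.finrank_lt_finrank_of_lt (le_sup_left.lt_of_ne fun h => hne ?_)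
    exact (Submodule.eq_of_le_of_finrank_eq (h ▸ le_sup_right) (by omega)).symm
  have hle := Submodule.finrank_mono (sup_le hYX hZX)
  have := Submodule.finrank_sup_add_finrank_inf_eq Y Z
  omega

end Subspaces

section Covers

variable {F V : Type*} [Field F] [AddCommGroup V] [Module F V] [Finite V]

/-- The points of the quotient geometry `W / r`: the subspaces `X` with `r ≤ X ≤ W` whose
dimension exceeds that of `r` by one. For instance, if `r` is a line of a solid `W`, these are the
planes of `W` through `r`. -/
noncomputable def covers (r W : Submodule F V) : Finset (Submodule F V) :=
  (Set.toFinite {X | r ≤ X ∧ X ≤ W ∧ finrank F X = finrank F r + 1}).toFinset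

theorem mem_covers {r W X : Submodule F V} :
    X ∈ covers r W ↔ r ≤ X ∧ X ≤ W ∧ finrank F X = finrank F r + 1 := by
  simp [covers]

theorem mem_covers_bot {P W : Submodule F V} : P ∈ covers ⊥ W ↔ P ≤ W ∧ finrank F P = 1 := by
  simp [mem_covers]

theorem sup_point_mem_covers {r W P : Submodule F V} (hr : r ≤ W) (hP : finrank F P = 1)
    (h : ¬P ≤ r) (hPW : P ≤ W) : r ⊔ P ∈ covers r W :=
  mem_covers.mpr ⟨le_sup_left, sup_le hr hPW, finrank_sup_point hP h⟩

theorem sup_point_eq_of_mem_covers {r W X P : Submodule F V} (hX : X ∈ covers r W)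
    (hP : finrank F P = 1) (h : ¬P ≤ r) (hPX : P ≤ X) : r ⊔ P = X := by
  obtain ⟨hrX, _, hX⟩ := mem_covers.mp hX
  exact Submodule.eq_of_le_of_finrank_le (sup_le hrX hPX) (by rw [finrank_sup_point hP h, hX])

theorem sup_point_eq_iff {r W X P : Submodule F V} (hX : X ∈ covers r W)
    (hP : finrank F P = 1) (h : ¬P ≤ r) : r ⊔ P = X ↔ P ≤ X :=
  ⟨fun h' => h' ▸ le_sup_right, sup_point_eq_of_mem_covers hX hP h⟩

theorem finrank_sup_of_mem_covers {r W Y Z : Submodule F V} (hY : Y ∈ covers r W)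
    (hZ : Z ∈ covers r W) (hne : Y ≠ Z) : finrank F ↥(Y ⊔ Z) = finrank F r + 2 := by
  obtain ⟨hrY, -, hY⟩ := mem_covers.mp hY
  obtain ⟨hrZ, -, hZ⟩ := mem_covers.mp hZ
  have hle := Submodule.finrank_mono (le_inf hrY hrZ)
  have hlt : finrank F ↥(Y ⊓ Z) < finrank F Y := by
    refine Submodule.finrank_lt_finrank_of_lt (inf_le_left.lt_of_ne fun h => hne ?_)
    exact Submodule.eq_of_le_of_finrank_eq (inf_eq_left.mp h) (hY.trans hZ.symm)
  have := Submodule.finrank_sup_add_finrank_inf_eq Y Z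
  omega

theorem inf_eq_of_mem_covers {r W Y Z : Submodule F V} (hY : Y ∈ covers r W)
    (hZ : Z ∈ covers r W) (hne : Y ≠ Z) : Y ⊓ Z = r := by
  obtain ⟨hrY, -, hY1⟩ := mem_covers.mp hY
  obtain ⟨hrZ, -, hZ1⟩ := mem_covers.mp hZ
  have hsup := finrank_sup_of_mem_covers hY hZ hne
  have := Submodule.finrank_sup_add_finrank_inf_eq Y Z
  exact (Submodule.eq_of_le_of_finrank_le (le_inf hrY hrZ) (by omega)).symm

theorem exists_mem_covers_forall_not_le {r W : Submodule F V} {M : Finset (Submodule F V)}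
    (hM : ∀ P ∈ M, finrank F P = 1 ∧ ¬P ≤ r) (hcard : M.card < (covers r W).card) :
    ∃ X ∈ covers r W, ∀ P ∈ M, ¬P ≤ X := by
  classical
  obtain ⟨X, hX, hXM⟩ := Finset.exists_mem_notMem_of_card_lt_card
    ((Finset.card_image_le (s := M) (f := (r ⊔ ·))).trans_lt hcard)
  refine ⟨X, hX, fun P hP hle => hXM (Finset.mem_image.mpr ⟨P, hP, ?_⟩)⟩
  exact sup_point_eq_of_mem_covers hX (hM P hP).1 (hM P hP).2 hle

open Classical in
theorem sum_covers_card_filter_le {r W : Submodule F V} (hr : r ≤ W) (K : Finset (Submodule F V))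
    (hK : ∀ P ∈ K, finrank F P = 1 ∧ ¬P ≤ r ∧ P ≤ W) :
    ∑ X ∈ covers r W, (K.filter (· ≤ X)).card = K.card := by
  rw [Finset.card_eq_sum_card_fiberwise (f := fun P => r ⊔ P) (t := covers r W)
    fun P hP => sup_point_mem_covers hr (hK P hP).1 (hK P hP).2.1 (hK P hP).2.2]
  refine Finset.sum_congr rfl fun X hX => congrArg _ (Finset.filter_congr fun P hP => ?_)
  exact (sup_point_eq_iff hX (hK P hP).1 (hK P hP).2.1).symm

theorem ncard_diff_add_pow_finrank [Fintype F] {r X : Submodule F V} (h : r ≤ X) :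
    ((X : Set V) \ r).ncard + Fintype.card F ^ finrank F r = Fintype.card F ^ finrank F X := by
  have card_vectors (Y : Submodule F V) : (Y : Set V).ncard = Fintype.card F ^ finrank F Y := by
    rw [← Nat.card_eq_fintype_card, ← Module.natCard_eq_pow_finrank]; rfl
  rw [← card_vectors, ← card_vectors, Set.ncard_sdiff_add_ncard_of_subset h]

theorem card_covers_mul_add [Fintype F] {r W : Submodule F V} (hr : r ≤ W) :
    (covers r W).card * (Fintype.card F ^ (finrank F r + 1) - Fintype.card F ^ finrank F r)
      + Fintype.card F ^ finrank F r = Fintype.card F ^ finrank F W := by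
  classical
  have span_point {v : V} (hv : v ∉ r) :
      finrank F (F ∙ v) = 1 ∧ ¬(F ∙ v) ≤ r ∧ ∀ X : Submodule F V, F ∙ v ≤ X ↔ v ∈ X :=
    ⟨finrank_span_singleton fun h => hv (h ▸ r.zero_mem), by simpa using hv, by simp⟩
  rw [← ncard_diff_add_pow_finrank hr, Set.ncard_eq_toFinset_card _,
    Finset.card_eq_sum_card_fiberwise (f := fun v => r ⊔ F ∙ v) (t := covers r W)]
  · rw [Finset.sum_congr rfl, Finset.sum_const, smul_eq_mul]
    intro X hX
    obtain ⟨hrX, hXW, hX'⟩ := mem_covers.mp hX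
    rw [← hX', ← ncard_diff_add_pow_finrank hrX, Nat.add_sub_cancel, Set.ncard_eq_toFinset_card _]
    congr 1
    ext v
    simp only [Set.Finite.mem_toFinset, Finset.mem_filter, Set.mem_sdiff, SetLike.mem_coe]
    refine ⟨fun ⟨⟨_, hvr⟩, hv⟩ => ⟨?_, hvr⟩, fun ⟨hvX, hvr⟩ => ⟨⟨hXW hvX, hvr⟩, ?_⟩⟩ <;>
      obtain ⟨hv1, hvr', hle⟩ := span_point hvr
    · rwa [sup_point_eq_iff hX hv1 hvr', hle] at hv
    · rwa [sup_point_eq_iff hX hv1 hvr', hle]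
  · intro v hv
    obtain ⟨hvW, hvr⟩ : v ∈ W ∧ v ∉ r := by simpa using hv
    obtain ⟨hv1, hvr', hle⟩ := span_point hvr
    exact sup_point_mem_covers hr hv1 hvr' ((hle W).mpr hvW)

theorem card_covers [Fintype F] {r W : Submodule F V} (hr : r ≤ W) {c : ℕ}
    (hc : finrank F W = finrank F r + c) :
    (covers r W).card = ∑ i ∈ Finset.range c, Fintype.card F ^ i := by
  obtain ⟨m, hm⟩ : ∃ m, Fintype.card F = m + 2 :=
    Nat.exists_eq_add_of_le' (Fintype.one_lt_card (α := F))
  have hmul := card_covers_mul_add hr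
  rw [hc, hm] at hmul
  have hpos : 0 < (m + 2) ^ finrank F r := by positivity
  have hgeom := geom_sum_mul_add (m + 1) c
  have hpow : (m + 2) ^ (finrank F r + 1) - (m + 2) ^ finrank F r
      = (m + 1) * (m + 2) ^ finrank F r := by
    rw [pow_succ, mul_comm, ← Nat.sub_one_mul]; rfl
  rw [hpow, pow_add] at hmul
  rw [hm]
  refine Nat.eq_of_mul_eq_mul_right (Nat.mul_pos m.succ_pos hpos) ?_
  rw [Nat.succ_eq_add_one]
  linear_combination hmul - (m + 2) ^ finrank F r * hgeom

theorem card_covers_two [Fintype F] {r W : Submodule F V} (hr : r ≤ W)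
    (hc : finrank F W = finrank F r + 2) : (covers r W).card = Fintype.card F + 1 := by
  rw [card_covers hr hc]; simp [Finset.sum_range_succ, add_comm]

theorem card_covers_three [Fintype F] {r W : Submodule F V} (hr : r ≤ W)
    (hc : finrank F W = finrank F r + 3) :
    (covers r W).card = Fintype.card F ^ 2 + Fintype.card F + 1 := by
  rw [card_covers hr hc]; simp only [Finset.sum_range_succ, Finset.sum_range_zero]; ring

theorem card_covers_four [Fintype F] {r W : Submodule F V} (hr : r ≤ W)
    (hc : finrank F W = finrank F r + 4) :
    (covers r W).card = Fintype.card F ^ 3 + Fintype.card F ^ 2 + Fintype.card F + 1 := by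
  rw [card_covers hr hc]; simp only [Finset.sum_range_succ, Finset.sum_range_zero]; ring

theorem card_covers_five [Fintype F] {r W : Submodule F V} (hr : r ≤ W)
    (hc : finrank F W = finrank F r + 5) :
    (covers r W).card = Fintype.card F ^ 4 + Fintype.card F ^ 3 + Fintype.card F ^ 2
      + Fintype.card F + 1 := by
  rw [card_covers hr hc]; simp only [Finset.sum_range_succ, Finset.sum_range_zero]; ring

end Covers

section Caps

variable {F V : Type*} [Field F] [AddCommGroup V] [Module F V]
  {K : Finset (Submodule F V)} {Q W : Submodule F V}

/-- A cap, encoded as a finite set of one-dimensional subspaces, no three of them contained in a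
common two-dimensional subspace. -/
structure IsPointCap (K : Finset (Submodule F V)) : Prop where
  finrank_eq_one : ∀ P ∈ K, finrank F P = 1
  not_le_sup : ∀ A ∈ K, ∀ B ∈ K, ∀ C ∈ K, A ≠ B → A ≠ C → B ≠ C → ¬C ≤ A ⊔ B

open Classical in
/-- The section `K ∩ W` of a set of points by a subspace. -/
noncomputable def pointsIn (K : Finset (Submodule F V)) (W : Submodule F V) :
    Finset (Submodule F V) :=
  K.filter (· ≤ W)

open Classical in
/-- The points of contact of the tangents of `K` through `Q`: the points `P` of `K` such that the
line `PQ` has no further point in `K`. For `Q ∉ K`, their number is the number of tangents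
through `Q`. -/
noncomputable def tangentPoints (K : Finset (Submodule F V)) (Q : Submodule F V) :
    Finset (Submodule F V) :=
  K.filter fun P => ∀ P' ∈ K, P' ≠ P → ¬P' ≤ P ⊔ Q

/-- The point `Q` lies on a secant of `K`. -/
def OnSecant (K : Finset (Submodule F V)) (Q : Submodule F V) : Prop :=
  ∃ A ∈ K, ∃ B ∈ K, A ≠ B ∧ Q ≤ A ⊔ B

/-- Completeness of the cap `K` inside the subspace `W`: every point of `W` off `K` lies on a
secant, so that it cannot be added to `K`. -/
def IsCompleteIn (K : Finset (Submodule F V)) (W : Submodule F V) : Prop :=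
  ∀ Q : Submodule F V, finrank F Q = 1 → Q ≤ W → Q ∉ K → OnSecant K Q

theorem mem_pointsIn {P : Submodule F V} : P ∈ pointsIn K W ↔ P ∈ K ∧ P ≤ W := by
  simp [pointsIn]

theorem pointsIn_subset (K : Finset (Submodule F V)) (W : Submodule F V) : pointsIn K W ⊆ K :=
  fun _ hP => (mem_pointsIn.mp hP).1

theorem pointsIn_eq_self (h : ∀ P ∈ K, P ≤ W) : pointsIn K W = K := by
  simpa [pointsIn] using h

theorem pointsIn_mono {X : Submodule F V} (h : X ≤ W) : pointsIn K X ⊆ pointsIn K W :=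
  fun _ hP => mem_pointsIn.mpr ⟨(mem_pointsIn.mp hP).1, (mem_pointsIn.mp hP).2.trans h⟩

theorem pointsIn_pointsIn (K : Finset (Submodule F V)) (X W : Submodule F V) :
    pointsIn (pointsIn K W) X = pointsIn K (W ⊓ X) := by
  ext P
  simp only [mem_pointsIn, le_inf_iff, and_assoc]

theorem pointsIn_pointsIn_of_le {X : Submodule F V} (h : X ≤ W) :
    pointsIn (pointsIn K W) X = pointsIn K X := by
  rw [pointsIn_pointsIn, inf_eq_right.mpr h]

theorem pointsIn_top (K : Finset (Submodule F V)) : pointsIn K ⊤ = K :=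
  pointsIn_eq_self fun _ _ => le_top

theorem pointsIn_inter_pointsIn (K : Finset (Submodule F V)) (X Y : Submodule F V) :
    pointsIn K X ∩ pointsIn K Y = pointsIn K (X ⊓ Y) := by
  ext P
  simp only [Finset.mem_inter, mem_pointsIn, le_inf_iff]
  tauto

theorem mem_tangentPoints {P : Submodule F V} :
    P ∈ tangentPoints K Q ↔ P ∈ K ∧ ∀ P' ∈ K, P' ≠ P → ¬P' ≤ P ⊔ Q := by
  simp [tangentPoints]

theorem tangentPoints_subset (K : Finset (Submodule F V)) (Q : Submodule F V) :
    tangentPoints K Q ⊆ K :=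
  fun _ hP => (mem_tangentPoints.mp hP).1

theorem tangentPoints_pointsIn (hQ : Q ≤ W) :
    tangentPoints (pointsIn K W) Q = pointsIn (tangentPoints K Q) W := by
  ext P
  simp only [mem_tangentPoints, mem_pointsIn]
  constructor
  · rintro ⟨⟨hP, hPW⟩, htan⟩
    exact ⟨⟨hP, fun P' hP' hne hle => htan P' ⟨hP', hle.trans (sup_le hPW hQ)⟩ hne hle⟩, hPW⟩
  · rintro ⟨⟨hP, htan⟩, hPW⟩
    exact ⟨⟨hP, hPW⟩, fun P' hP' => htan P' hP'.1⟩

theorem IsPointCap.mono {L : Finset (Submodule F V)} (h : IsPointCap K) (hL : L ⊆ K) :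
    IsPointCap L :=
  ⟨fun P hP => h.finrank_eq_one P (hL hP),
   fun A hA B hB C hC => h.not_le_sup A (hL hA) B (hL hB) C (hL hC)⟩

protected theorem IsPointCap.pointsIn (h : IsPointCap K) (W : Submodule F V) :
    IsPointCap (pointsIn K W) :=
  h.mono (pointsIn_subset K W)

variable [FiniteDimensional F V]

theorem tangentPoints_eq_self (hK : IsPointCap K) (hQ : finrank F Q = 1)
    (h : ¬OnSecant K Q) : tangentPoints K Q = K := by
  classical
  refine Finset.filter_true_of_mem fun P hP P' hP' hne hle => h ⟨P', hP', P, hP, hne, ?_⟩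
  rw [sup_comm] at hle
  rw [sup_point_exchange hQ (hK.finrank_eq_one P hP) (hK.finrank_eq_one P' hP') hle hne]
  exact le_sup_left

theorem IsPointCap.insert (hK : IsPointCap K) (hQ : finrank F Q = 1)
    (h : ¬OnSecant K Q) : IsPointCap (insert Q K) := by
  have tangent : ∀ A ∈ K, ∀ B ∈ K, A ≠ B → ¬B ≤ A ⊔ Q := fun A hA B hB hne =>
    (mem_tangentPoints.mp ((tangentPoints_eq_self hK hQ h).symm ▸ hA)).2 B hB hne.symm
  refine ⟨fun P hP => ?_, fun A hA B hB C hC hAB hAC hBC => ?_⟩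
  · rcases Finset.mem_insert.mp hP with rfl | hP
    exacts [hQ, hK.finrank_eq_one P hP]
  · rcases Finset.mem_insert.mp hA with rfl | hA'
    · rw [sup_comm]
      exact tangent B (Finset.mem_of_mem_insert_of_ne hB hAB.symm) C
        (Finset.mem_of_mem_insert_of_ne hC hAC.symm) hBC
    rcases Finset.mem_insert.mp hB with rfl | hB'
    · exact tangent A hA' C (Finset.mem_of_mem_insert_of_ne hC hBC.symm) hAC
    rcases Finset.mem_insert.mp hC with rfl | hC'
    · exact fun hle => h ⟨A, hA', B, hB', hAB, hle⟩
    · exact hK.not_le_sup A hA' B hB' C hC' hAB hAC hBC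

theorem IsPointCap.exists_isCompleteIn [Finite V] (hK : IsPointCap K) (hW : ∀ P ∈ K, P ≤ W) :
    ∃ L, IsPointCap L ∧ K ⊆ L ∧ (∀ P ∈ L, P ≤ W) ∧ IsCompleteIn L W := by
  obtain ⟨L, hKL, ⟨hL, hLW⟩, hmax⟩ := Set.Finite.exists_le_maximal
    (Set.toFinite {L : Finset (Submodule F V) | IsPointCap L ∧ ∀ P ∈ L, P ≤ W}) ⟨hK, hW⟩
  refine ⟨L, hL, hKL, hLW, fun Q hQ hQW hQL => by_contra fun hsec => hQL ?_⟩
  exact hmax ⟨hL.insert hQ hsec, Finset.forall_mem_insert _ _ _ |>.mpr ⟨hQW, hLW⟩⟩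
    (Finset.subset_insert Q L) (Finset.mem_insert_self Q L)

end Caps

section LineAlgebra

open Polynomial Lagrange

variable {F ι : Type*} [Field F]

theorem exists_nodal_mul_eq_X_pow_card_sub_X [Fintype F] {S : Finset ι} {α : ι → F}
    (hα : Set.InjOn α S) :
    ∃ p : F[X], nodal S α * p = X ^ Fintype.card F - X ∧ p.Monic ∧
      S.card + p.natDegree = Fintype.card F := by
  have hcop : (S : Set ι).Pairwise (Function.onFun IsCoprime fun i => X - C (α i)) :=
    fun i hi j hj hij => isCoprime_X_sub_C_of_isUnit_sub
      (sub_ne_zero.mpr fun h => hij (hα hi hj h)).isUnit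
  have hdvd : nodal S α ∣ X ^ Fintype.card F - X := by
    refine Finset.prod_dvd_of_coprime hcop fun i _ => dvd_iff_isRoot.mpr ?_
    simp [FiniteField.pow_card]
  obtain ⟨p, hp⟩ := hdvd
  have hmonic : (nodal S α * p).Monic := hp ▸ monic_X_pow_sub (by
    rw [degree_X]; exact_mod_cast Fintype.one_lt_card)
  have hpm : p.Monic := nodal_monic.of_mul_monic_left hmonic
  refine ⟨p, hp.symm, hpm, ?_⟩
  rw [← natDegree_nodal (s := S) (v := α), ← nodal_monic.natDegree_mul hpm, ← hp,
    FiniteField.X_pow_card_sub_X_natDegree_eq F Fintype.one_lt_card]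

theorem injOn_div_of_det_ne_zero {S : Finset ι} {c b : ι → F} (hc : ∀ z ∈ S, c z ≠ 0)
    (hdet : ∀ e ∈ S, ∀ z ∈ S, e ≠ z → c z * b e - c e * b z ≠ 0) :
    Set.InjOn (fun u => b u / c u) S := fun e he z hz h => by
  by_contra hne
  rw [div_eq_div_iff (hc e he) (hc z hz)] at h
  exact hdet e he z hz hne (by linear_combination h)

variable [DecidableEq ι]

/- The weights of `S` are, up to sign, the values at its nodes of the complementary divisor `p` of
`X ^ q - X`, so the sum is a coefficient of `p` by Lagrange interpolation over `E`. -/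
theorem sum_nodalWeight_mul_nodalWeight [Fintype F] {S E : Finset ι} {α : ι → F}
    (hα : Set.InjOn α S) (hE : E ⊆ S) (hn : Fintype.card F + 1 ≤ S.card + E.card) :
    ∑ e ∈ E, nodalWeight S α e * nodalWeight E α e
      = if Fintype.card F + 1 = S.card + E.card then -1 else 0 := by
  obtain ⟨p, hp, hmonic, hdeg⟩ := exists_nodal_mul_eq_X_pow_card_sub_X hα
  have eval_p : ∀ e ∈ S, p.eval (α e) = -nodalWeight S α e := fun e he => by
    have hder := congrArg (fun f => (derivative f).eval (α e)) hp
    simp only [derivative_mul, derivative_sub, derivative_X_pow, derivative_X, eval_add, eval_mul,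
      eval_nodal_derivative_eval_node_eq he, eval_nodal_at_node he, FiniteField.cast_card_eq_zero,
      map_zero, zero_mul, add_zero, zero_sub, eval_neg, eval_one] at hder
    rw [nodalWeight_eq_eval_nodal_erase_inv,
      inv_eq_of_mul_eq_one_right (b := -p.eval (α e)) (by linear_combination -hder), neg_neg]
  have hlt : p.degree < E.card := by
    rw [degree_eq_natDegree hmonic.ne_zero]; exact_mod_cast (by omega)
  have hsum : ∑ e ∈ E, nodalWeight S α e * nodalWeight E α e = -p.coeff (E.card - 1) := by
    rw [coeff_eq_sum (hα.mono hE) hlt, ← Finset.sum_neg_distrib]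
    refine Finset.sum_congr rfl fun e he => ?_
    rw [eval_p e (hE he), nodalWeight, nodalWeight, Finset.prod_inv_distrib,
      Finset.prod_inv_distrib]
    ring
  rw [hsum]
  split_ifs with h
  · rw [show E.card - 1 = p.natDegree by omega, hmonic.coeff_natDegree]
  · rw [coeff_eq_zero_of_natDegree_lt (by omega), neg_zero]

/- The determinants `c z * b e - c e * b z` of the points `(c z, b z)` of a projective line are
`c e * c z * (α e - α z)` in the affine coordinate `α = b / c`. -/
theorem inv_prod_det_mul_prod_div_det {S E : Finset ι} {c : ι → F} (b : ι → F)
    (hc : ∀ z ∈ S, c z ≠ 0) (hE : E ⊆ S) {e : ι} (he : e ∈ E) :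
    (∏ z ∈ S.erase e, (c z * b e - c e * b z))⁻¹
        * (∏ u ∈ E.erase e, c u / (c u * b e - c e * b u)) * c e ^ (S.card + E.card)
      = (∏ z ∈ S, c z)⁻¹ * c e ^ 3
        * (nodalWeight S (fun u => b u / c u) e * nodalWeight E (fun u => b u / c u) e) := by
  have hce := hc e (hE he)
  have det_eq : ∀ z ∈ S, c z * b e - c e * b z = c e * c z * (b e / c e - b z / c z) :=
    fun z hz => by have := hc z hz; field_simp
  have hS : (∏ z ∈ S.erase e, (c z * b e - c e * b z))⁻¹ * c e ^ S.card
      = (∏ z ∈ S, c z)⁻¹ * c e ^ 2 * nodalWeight S (fun u => b u / c u) e := by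
    rw [Finset.prod_congr rfl fun z hz => det_eq z (Finset.mem_of_mem_erase hz),
      Finset.prod_mul_distrib, Finset.prod_mul_distrib, Finset.prod_const,
      ← Finset.mul_prod_erase S c (hE he), ← Finset.card_erase_add_one (hE he), nodalWeight,
      Finset.prod_inv_distrib, mul_inv, mul_inv, mul_inv, pow_succ]
    field_simp
  have hE' : (∏ u ∈ E.erase e, c u / (c u * b e - c e * b u)) * c e ^ E.card
      = c e * nodalWeight E (fun u => b u / c u) e := by
    have factor : ∀ u ∈ E.erase e, c u / (c u * b e - c e * b u)
        = (c e)⁻¹ * (b e / c e - b u / c u)⁻¹ := fun u hu => by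
      have hu' := hE (Finset.mem_of_mem_erase hu)
      have := hc u hu'
      rw [det_eq u hu', mul_comm (c e), mul_assoc, div_mul_cancel_left₀ this, mul_inv]
    rw [Finset.prod_congr rfl factor, Finset.prod_mul_distrib, Finset.prod_const,
      ← Finset.card_erase_add_one he, nodalWeight, pow_succ, inv_pow]
    have := pow_ne_zero (E.erase e).card hce
    generalize ∏ u ∈ E.erase e, (b e / c e - b u / c u)⁻¹ = w
    field_simp
  linear_combination (∏ u ∈ E.erase e, c u / (c u * b e - c e * b u)) * c e ^ E.card * hS
    + (∏ z ∈ S, c z)⁻¹ * c e ^ 2 * nodalWeight S (fun u => b u / c u) e * hE'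

variable [Fintype F]

theorem sum_inv_prod_det_eq_zero {S E : Finset ι} {c b : ι → F} (hc : ∀ z ∈ S, c z ≠ 0)
    (hdet : ∀ e ∈ S, ∀ z ∈ S, e ≠ z → c z * b e - c e * b z ≠ 0) (hE : E ⊆ S)
    (hn : S.card + E.card = Fintype.card F + 2) :
    ∑ e ∈ E, (∏ z ∈ S.erase e, (c z * b e - c e * b z))⁻¹
      * ∏ u ∈ E.erase e, c u / (c u * b e - c e * b u) = 0 := by
  have hsum := sum_nodalWeight_mul_nodalWeight (injOn_div_of_det_ne_zero hc hdet) hE (by omega)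
  rw [if_neg (by omega)] at hsum
  rw [← mul_zero (∏ z ∈ S, c z)⁻¹, ← hsum, Finset.mul_sum]
  refine Finset.sum_congr rfl fun e he => ?_
  have hterm := inv_prod_det_mul_prod_div_det b hc hE he
  rw [hn, pow_add, FiniteField.pow_card] at hterm
  exact mul_right_cancel₀ (pow_ne_zero 3 (hc e (hE he))) (by linear_combination hterm)

theorem sum_inv_prod_det_mul_inv {S E : Finset ι} {c b : ι → F} (hc : ∀ z ∈ S, c z ≠ 0)
    (hdet : ∀ e ∈ S, ∀ z ∈ S, e ≠ z → c z * b e - c e * b z ≠ 0) (hE : E ⊆ S)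
    (hn : S.card + E.card = Fintype.card F + 1) :
    ∑ e ∈ E, (c e)⁻¹ * ((∏ z ∈ S.erase e, (c z * b e - c e * b z))⁻¹
      * ∏ u ∈ E.erase e, c u / (c u * b e - c e * b u)) = -(∏ z ∈ S, c z)⁻¹ := by
  have hsum := sum_nodalWeight_mul_nodalWeight (injOn_div_of_det_ne_zero hc hdet) hE hn.ge
  rw [if_pos hn.symm] at hsum
  rw [← mul_neg_one, ← hsum, Finset.mul_sum]
  refine Finset.sum_congr rfl fun e he => ?_
  have hce := hc e (hE he)
  have hterm := inv_prod_det_mul_prod_div_det b hc hE he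
  rw [hn, pow_add, FiniteField.pow_card] at hterm
  rw [inv_mul_eq_iff_eq_mul₀ hce]
  exact mul_right_cancel₀ (pow_ne_zero 2 hce) (by linear_combination hterm)

end LineAlgebra

section TangentSum

variable {F ι : Type*} [Field F] {x : ι → Fin 3 → F}

/-- The determinant of the homogeneous coordinates of three points of a projective plane. -/
def bracket (x : ι → Fin 3 → F) (i j k : ι) : F :=
  (Matrix.of ![x i, x j, x k]).det

theorem bracket_plucker (x : ι → Fin 3 → F) (a Q y e z : ι) :
    bracket x a e z * bracket x a Q y
      = bracket x a Q e * bracket x a y z - bracket x a Q z * bracket x a y e := by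
  simp only [bracket, Matrix.det_fin_three, Matrix.of_apply, Matrix.cons_val]
  ring

theorem bracket_swap_left [CharP F 2] (x : ι → Fin 3 → F) (i j k : ι) :
    bracket x j i k = bracket x i j k := by
  rw [← CharTwo.neg_eq (bracket x i j k)]
  simp only [bracket, Matrix.det_fin_three, Matrix.of_apply, Matrix.cons_val]
  ring

theorem bracket_swap_outer [CharP F 2] (x : ι → Fin 3 → F) (i j k : ι) :
    bracket x k j i = bracket x i j k := by
  rw [← CharTwo.neg_eq (bracket x i j k)]
  simp only [bracket, Matrix.det_fin_three, Matrix.of_apply, Matrix.cons_val]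
  ring

/- Projecting from `a` turns the brackets `bracket x a e z` into two by two determinants. -/
theorem bracket_eq_det (x : ι → Fin 3 → F) {a Q y : ι} (hy : bracket x a Q y ≠ 0) (e z : ι) :
    bracket x a e z = bracket x a Q z * (-bracket x a y e / bracket x a Q y)
      - bracket x a Q e * (-bracket x a y z / bracket x a Q y) := by
  field_simp
  linear_combination bracket_plucker x a Q y e z

/-- The points of `K` with coordinates `x` form an arc: no three of them are collinear. -/
def IsArc (x : ι → Fin 3 → F) (K : Finset ι) : Prop :=
  ∀ a ∈ K, ∀ b ∈ K, ∀ c ∈ K, a ≠ b → a ≠ c → b ≠ c → bracket x a b c ≠ 0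

section

variable [DecidableEq ι] {K E : Finset ι} {Q : ι}

/-- The contribution of the point `a` to the alternating sum over the arc `K` and the set `E` of
points of contact. After multiplication by `(∏ z ∈ E.erase a, bracket x a Q z)⁻¹` its terms become
symmetric in `a` and `e` in characteristic two. -/
def tangentSum (x : ι → Fin 3 → F) (K E : Finset ι) (Q a : ι) : F :=
  ∑ e ∈ E.erase a, (∏ z ∈ (K.erase a).erase e, bracket x a e z)⁻¹
    * ∏ u ∈ (E.erase a).erase e, bracket x a Q u / bracket x a e u

theorem sum_tangentSum_eq_zero [CharP F 2] (x : ι → Fin 3 → F) (K : Finset ι)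
    (hQ : ∀ a ∈ E, ∀ z ∈ E, z ≠ a → bracket x a Q z ≠ 0) :
    ∑ a ∈ E, tangentSum x K E Q a * (∏ z ∈ E.erase a, bracket x a Q z)⁻¹ = 0 := by
  have symmetric_form : ∀ a ∈ E, tangentSum x K E Q a * (∏ z ∈ E.erase a, bracket x a Q z)⁻¹
      = ∑ e ∈ E.erase a, (∏ z ∈ (K.erase a).erase e, bracket x a e z)⁻¹
        * (∏ u ∈ (E.erase a).erase e, bracket x a e u)⁻¹ * (bracket x a Q e)⁻¹ := by
    intro a ha
    rw [tangentSum, Finset.sum_mul]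
    refine Finset.sum_congr rfl fun e he => ?_
    have hne : ∏ z ∈ (E.erase a).erase e, bracket x a Q z ≠ 0 :=
      Finset.prod_ne_zero_iff.mpr fun z hz =>
        have hz := Finset.mem_erase.mp (Finset.mem_of_mem_erase hz)
        hQ a ha z hz.2 hz.1
    rw [← Finset.mul_prod_erase _ (fun z => bracket x a Q z) he, Finset.prod_div_distrib, mul_inv]
    field_simp
  rw [Finset.sum_congr rfl symmetric_form, Finset.sum_sigma']
  refine Finset.sum_involution (fun p _ => ⟨p.2, p.1⟩) ?_ ?_ ?_ fun _ _ => rfl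
  · rintro ⟨a, e⟩ _
    dsimp only
    rw [Finset.erase_right_comm (s := K) (a := e), Finset.erase_right_comm (s := E) (a := e)]
    simp only [bracket_swap_outer x a Q e, bracket_swap_left x a e]
    exact CharTwo.add_self_eq_zero _
  · rintro ⟨a, e⟩ h _ h'
    exact (Finset.mem_erase.mp (Finset.mem_sigma.mp h).2).1 (congrArg Sigma.fst h')
  · rintro ⟨a, e⟩ h
    simp only [Finset.mem_sigma, Finset.mem_erase] at h ⊢
    exact ⟨h.2.2, h.2.1.symm, h.1⟩

variable [Fintype F]

theorem tangentSum_eq_zero (hK : IsArc x K) (hE : E ⊆ K)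
    (hcard : E.card + K.card = Fintype.card F + 4) {a : ι} (ha : a ∈ E)
    (haQ : ∀ z ∈ K, z ≠ a → bracket x a Q z ≠ 0) : tangentSum x K E Q a = 0 := by
  have haK := hE ha
  have hcardK := Finset.card_erase_add_one haK
  have hcardE := Finset.card_erase_add_one ha
  have hle := Finset.card_le_card hE
  obtain ⟨y, hy⟩ : (K.erase a).Nonempty := Finset.card_pos.mp (by omega)
  have hc : ∀ z ∈ K.erase a, bracket x a Q z ≠ 0 := fun z hz =>
    haQ z (Finset.mem_of_mem_erase hz) (Finset.ne_of_mem_erase hz)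
  have hsum := sum_inv_prod_det_eq_zero (E := E.erase a)
    (b := fun u => -bracket x a y u / bracket x a Q y) hc ?_
    (Finset.erase_subset_erase a hE) (by omega)
  · simpa only [tangentSum, ← bracket_eq_det x (hc y hy)] using hsum
  · intro e he z hz hne
    rw [← bracket_eq_det x (hc y hy)]
    rw [Finset.mem_erase] at he hz
    exact hK a haK e he.2 z hz.2 he.1.symm hz.1.symm hne

theorem tangentSum_ne_zero {A B : ι} (hK : IsArc x K) (hE : E ⊆ K)
    (hcard : E.card + K.card = Fintype.card F + 4) (hA : A ∈ E) (hB : B ∈ K) (hBE : B ∉ E)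
    (hE2 : 2 ≤ E.card) (hAQB : bracket x A Q B = 0)
    (hAQ : ∀ z ∈ K, z ≠ A → z ≠ B → bracket x A Q z ≠ 0) : tangentSum x K E Q A ≠ 0 := by
  have hAB : A ≠ B := fun h => hBE (h ▸ hA)
  have hBK : B ∈ K.erase A := Finset.mem_erase.mpr ⟨hAB.symm, hB⟩
  have hcardK := Finset.card_erase_add_one (hE hA)
  have hcardKB := Finset.card_erase_add_one hBK
  have hcardE := Finset.card_erase_add_one hA
  set S := (K.erase A).erase B with hS
  have mem_S : ∀ {z}, z ∈ S ↔ z ≠ B ∧ z ≠ A ∧ z ∈ K := by simp [hS]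
  have hES : E.erase A ⊆ S := fun e he => mem_S.mpr
    ⟨fun h => hBE (h ▸ Finset.mem_of_mem_erase he), Finset.ne_of_mem_erase he,
      hE (Finset.mem_of_mem_erase he)⟩
  have hc : ∀ z ∈ S, bracket x A Q z ≠ 0 := fun z hz =>
    have ⟨hzB, hzA, hzK⟩ := mem_S.mp hz
    hAQ z hzK hzA hzB
  obtain ⟨y, hyE⟩ : (E.erase A).Nonempty := Finset.card_pos.mp (by omega)
  have hy := hc y (hES hyE)
  -- As `Q` lies on `AB`, the factors of `B` are `bracket x A Q e` up to a constant.
  set β : F := bracket x A y B / bracket x A Q y with hβ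
  have bracket_B (e : ι) : bracket x A e B = bracket x A Q e * β := by
    rw [bracket_eq_det x hy, hAQB, hβ]; ring
  have hβ0 : β ≠ 0 := fun h => by
    have ⟨hyB, hyA, hyK⟩ := mem_S.mp (hES hyE)
    exact hK A (hE hA) y hyK B hB hyA.symm hAB hyB (by rw [bracket_B, h, mul_zero])
  have hsum := sum_inv_prod_det_mul_inv (E := E.erase A)
    (b := fun u => -bracket x A y u / bracket x A Q y) hc ?_ hES (by omega)
  · simp only [← bracket_eq_det x hy] at hsum
    have : tangentSum x K E Q A = β⁻¹ * -(∏ z ∈ S, bracket x A Q z)⁻¹ := by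
      rw [← hsum, tangentSum, Finset.mul_sum]
      refine Finset.sum_congr rfl fun e he => ?_
      have hBe : B ∈ (K.erase A).erase e :=
        Finset.mem_erase.mpr ⟨(mem_S.mp (hES he)).1.symm, hBK⟩
      rw [← Finset.mul_prod_erase _ _ hBe, Finset.erase_right_comm, bracket_B, mul_inv, mul_inv]
      ring
    rw [this]
    exact mul_ne_zero (inv_ne_zero hβ0)
      (neg_ne_zero.mpr (inv_ne_zero (Finset.prod_ne_zero_iff.mpr hc)))
  · intro e he z hz hne
    rw [← bracket_eq_det x hy]
    have ⟨_, heA, heK⟩ := mem_S.mp he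
    have ⟨_, hzA, hzK⟩ := mem_S.mp hz
    exact hK A (hE hA) e heK z hzK heA.symm hzA.symm hne

end

/- With `E = T ∪ {A}`, the contribution of `A` would be the only nonzero one in a vanishing sum. -/
theorem IsArc.card_add_card_ne_of_tangent [Fintype F] [CharP F 2] {K T : Finset ι} {Q A B : ι}
    (hK : IsArc x K) (hA : A ∈ K) (hB : B ∈ K)
    (hT : T ⊆ K) (hAT : A ∉ T) (hBT : B ∉ T) (hAB : A ≠ B) (hT0 : T.Nonempty)
    (hAQB : bracket x A Q B = 0) (hAQ : ∀ z ∈ K, z ≠ A → z ≠ B → bracket x A Q z ≠ 0)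
    (hTQ : ∀ a ∈ T, ∀ z ∈ K, z ≠ a → bracket x a Q z ≠ 0) :
    T.card + K.card ≠ Fintype.card F + 3 := by
  classical
  intro hcard
  have hAE := Finset.mem_insert_self A T
  have hE : insert A T ⊆ K := Finset.insert_subset hA hT
  have hBE : B ∉ insert A T := by simp [hAB.symm, hBT]
  have hcardE := Finset.card_insert_of_notMem hAT
  have hQ : ∀ a ∈ insert A T, ∀ z ∈ insert A T, z ≠ a → bracket x a Q z ≠ 0 := by
    intro a ha z hz hza
    rcases Finset.mem_insert.mp ha with rfl | ha
    · exact hAQ z (hE hz) hza fun h => hBE (h ▸ hz)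
    · exact hTQ a ha z (hE hz) hza
  have hsum := sum_tangentSum_eq_zero x K hQ
  rw [Finset.sum_insert hAT, Finset.sum_eq_zero fun a ha => by
    rw [tangentSum_eq_zero hK hE (by omega) (Finset.mem_insert_of_mem ha) (hTQ a ha), zero_mul],
    add_zero] at hsum
  refine mul_ne_zero (tangentSum_ne_zero hK hE (by omega) hAE hB hBE ?_ hAQB hAQ) ?_ hsum
  · have := hT0.card_pos; omega
  · exact inv_ne_zero (Finset.prod_ne_zero_iff.mpr fun z hz =>
      hQ A hAE z (Finset.mem_of_mem_erase hz) (Finset.ne_of_mem_erase hz))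

end TangentSum

section Tangents

variable {F V : Type*} [Field F] [AddCommGroup V] [Module F V] {K : Finset (Submodule F V)}

protected theorem OnSecant.pointsIn {A B Q W : Submodule F V} (hA : A ∈ K) (hB : B ∈ K)
    (hAB : A ≠ B) (hQAB : Q ≤ A ⊔ B) (h : A ⊔ B ≤ W) : OnSecant (pointsIn K W) Q :=
  ⟨A, mem_pointsIn.mpr ⟨hA, le_sup_left.trans h⟩, B, mem_pointsIn.mpr ⟨hB, le_sup_right.trans h⟩,
    hAB, hQAB⟩

theorem OnSecant.le {Q W : Submodule F V} (h : OnSecant K Q) (hKW : ∀ P ∈ K, P ≤ W) : Q ≤ W := by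
  obtain ⟨A, hA, B, hB, -, hQ⟩ := h
  exact hQ.trans (sup_le (hKW A hA) (hKW B hB))

theorem IsPointCap.not_le {P R : Submodule F V} (hK : IsPointCap K) (hP : P ∈ K) (hR : R ∈ K)
    (hne : R ≠ P) : ¬R ≤ P :=
  fun h => hne (eq_of_point_le (hK.finrank_eq_one R hR) (hK.finrank_eq_one P hP) h)

theorem IsPointCap.pointsIn_point {P : Submodule F V} (hK : IsPointCap K) (hP : P ∈ K) :
    pointsIn K P = {P} := by
  ext R
  simp only [mem_pointsIn, Finset.mem_singleton]
  exact ⟨fun h => by_contra fun hne => hK.not_le hP h.1 hne h.2, by rintro rfl; exact ⟨hP, le_rfl⟩⟩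

theorem IsPointCap.pointsIn_eq_empty_of_notMem {Q : Submodule F V} (hK : IsPointCap K)
    (hQ : finrank F Q = 1) (hQK : Q ∉ K) : pointsIn K Q = ∅ :=
  Finset.eq_empty_of_forall_notMem fun P hP =>
    have ⟨hPK, hPQ⟩ := mem_pointsIn.mp hP
    hQK (eq_of_point_le (hK.finrank_eq_one P hPK) hQ hPQ ▸ hPK)

theorem IsPointCap.pointsIn_secant {A B : Submodule F V} (hK : IsPointCap K) (hA : A ∈ K)
    (hB : B ∈ K) (hAB : A ≠ B) : pointsIn K (A ⊔ B) = {A, B} := by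
  ext R
  simp only [mem_pointsIn, Finset.mem_insert, Finset.mem_singleton]
  refine ⟨fun ⟨hR, hle⟩ => ?_, ?_⟩
  · by_contra! hne
    exact hK.not_le_sup A hA B hB R hR hAB hne.1.symm hne.2.symm hle
  · rintro (rfl | rfl)
    exacts [⟨hA, le_sup_left⟩, ⟨hB, le_sup_right⟩]

theorem IsPointCap.card_pointsIn_secant {A B : Submodule F V} (hK : IsPointCap K) (hA : A ∈ K)
    (hB : B ∈ K) (hAB : A ≠ B) : (pointsIn K (A ⊔ B)).card = 2 := by
  rw [hK.pointsIn_secant hA hB hAB, Finset.card_pair hAB]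

theorem mem_tangentPoints_iff_pointsIn_eq {P Q : Submodule F V} :
    P ∈ tangentPoints K Q ↔ pointsIn K (P ⊔ Q) = {P} := by
  simp only [mem_tangentPoints, Finset.eq_singleton_iff_unique_mem, mem_pointsIn, le_sup_left,
    and_true, and_imp]
  exact and_congr_right fun _ => forall₂_congr fun R _ => not_imp_not.symm.trans (by tauto)

theorem IsPointCap.subset_tangentPoints {O : Finset (Submodule F V)} {N S : Submodule F V}
    (hO : IsPointCap O) (hKO : pointsIn K S ⊆ O) (hN : N ∈ O) (hNS : N ≤ S)
    (hNK : N ∉ K) : pointsIn K S ⊆ tangentPoints K N := by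
  intro P hP
  obtain ⟨hPK, hPS⟩ := mem_pointsIn.mp hP
  refine mem_tangentPoints.mpr ⟨hPK, fun R hR hne hle => ?_⟩
  exact hO.not_le_sup P (hKO hP) N hN R
    (hKO (mem_pointsIn.mpr ⟨hR, hle.trans (sup_le hPS hNS)⟩)) (fun h => hNK (h ▸ hPK)) hne.symm
    (fun h => hNK (h ▸ hR)) hle

theorem IsPointCap.le_sup_of_le_secant [FiniteDimensional F V] {A B Q : Submodule F V}
    (hK : IsPointCap K) (hA : A ∈ K) (hB : B ∈ K) (hQ : finrank F Q = 1) (hQK : Q ∉ K)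
    (hQAB : Q ≤ A ⊔ B) : B ≤ A ⊔ Q := by
  rw [sup_comm] at hQAB ⊢
  rw [sup_point_exchange (hK.finrank_eq_one B hB) (hK.finrank_eq_one A hA) hQ hQAB
    fun h => hQK (h ▸ hA)]
  exact le_sup_left

theorem IsPointCap.notMem_tangentPoints [FiniteDimensional F V] {A B Q : Submodule F V}
    (hK : IsPointCap K) (hA : A ∈ K) (hB : B ∈ K) (hAB : A ≠ B) (hQ : finrank F Q = 1)
    (hQK : Q ∉ K) (hQAB : Q ≤ A ⊔ B) : A ∉ tangentPoints K Q := fun h =>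
  (mem_tangentPoints.mp h).2 B hB hAB.symm (hK.le_sup_of_le_secant hA hB hQ hQK hQAB)

theorem IsPointCap.not_onSecant_of_subset_tangentPoints [FiniteDimensional F V]
    {N X : Submodule F V} (hK : IsPointCap K) (hN : finrank F N = 1) (hNK : N ∉ K)
    (h : pointsIn K X ⊆ tangentPoints K N) :
    ¬OnSecant (pointsIn K X) N := by
  rintro ⟨A, hA, B, hB, hAB, hle⟩
  exact hK.notMem_tangentPoints (pointsIn_subset K X hA) (pointsIn_subset K X hB) hAB hN hNK hle
    (h hA)

theorem IsPointCap.pointsIn_tangentPoints_secant [FiniteDimensional F V] {A B Q : Submodule F V}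
    (hK : IsPointCap K) (hA : A ∈ K) (hB : B ∈ K) (hAB : A ≠ B) (hQ : finrank F Q = 1)
    (hQK : Q ∉ K) (hQAB : Q ≤ A ⊔ B) :
    pointsIn (tangentPoints K Q) (A ⊔ B) = ∅ := by
  refine Finset.eq_empty_of_forall_notMem fun P hP => ?_
  obtain ⟨hPtan, hPAB⟩ := mem_pointsIn.mp hP
  have hP : P ∈ pointsIn K (A ⊔ B) :=
    mem_pointsIn.mpr ⟨tangentPoints_subset K Q hPtan, hPAB⟩
  rw [hK.pointsIn_secant hA hB hAB, Finset.mem_insert, Finset.mem_singleton] at hP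
  rcases hP with rfl | rfl
  · exact hK.notMem_tangentPoints hA hB hAB hQ hQK hQAB hPtan
  · exact hK.notMem_tangentPoints hB hA hAB.symm hQ hQK (sup_comm A P ▸ hQAB) hPtan

variable [Finite V]

theorem sum_covers_card_pointsIn_add (hK : ∀ P ∈ K, finrank F P = 1) {r W : Submodule F V}
    (hr : r ≤ W) :
    ∑ X ∈ covers r W, (pointsIn K X).card + (pointsIn K r).card
      = (pointsIn K W).card + (covers r W).card * (pointsIn K r).card := by
  classical
  set L := pointsIn K W \ pointsIn K r with hL
  have mem_L {P} : P ∈ L ↔ P ∈ K ∧ P ≤ W ∧ ¬P ≤ r := by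
    simp only [hL, Finset.mem_sdiff, mem_pointsIn]; tauto
  have split : ∀ X ∈ covers r W,
      (pointsIn K X).card = (L.filter (· ≤ X)).card + (pointsIn K r).card := by
    intro X hX
    obtain ⟨hrX, hXW, -⟩ := mem_covers.mp hX
    rw [← Finset.card_sdiff_add_card_eq_card (pointsIn_mono hrX)]
    congr 2
    ext P
    simp only [Finset.mem_sdiff, Finset.mem_filter, mem_L, mem_pointsIn]
    exact ⟨fun ⟨⟨hP, hPX⟩, h⟩ => ⟨⟨hP, hPX.trans hXW, fun h' => h ⟨hP, h'⟩⟩, hPX⟩,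
      fun ⟨⟨hP, _, h⟩, hPX⟩ => ⟨⟨hP, hPX⟩, fun h' => h h'.2⟩⟩
  have hsum := sum_covers_card_filter_le hr L fun P hP =>
    have ⟨hPK, hPW, hPr⟩ := mem_L.mp hP
    ⟨hK P hPK, hPr, hPW⟩
  rw [Finset.sum_congr rfl split, Finset.sum_add_distrib, hsum, Finset.sum_const, smul_eq_mul,
    ← Finset.card_sdiff_add_card_eq_card (pointsIn_mono (K := K) hr)]
  ring

/-- The tangents of `K` at the point `P` inside the subspace `X`. -/
noncomputable def tangents (K : Finset (Submodule F V)) (P X : Submodule F V) :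
    Finset (Submodule F V) :=
  (covers P X).filter fun l => pointsIn K l = {P}

theorem mem_tangents {P X l : Submodule F V} :
    l ∈ tangents K P X ↔ l ∈ covers P X ∧ pointsIn K l = {P} := by
  simp [tangents]

variable {P X : Submodule F V}

theorem IsPointCap.card_pointsIn_of_notMem_tangents (hK : IsPointCap K) (hP : P ∈ K)
    {l : Submodule F V} (hl : l ∈ covers P X) (htan : pointsIn K l ≠ {P}) :
    (pointsIn K l).card = 2 := by
  have hPl : P ∈ pointsIn K l := mem_pointsIn.mpr ⟨hP, (mem_covers.mp hl).1⟩
  obtain ⟨R, hR, hRP⟩ : ∃ R ∈ pointsIn K l, R ≠ P := by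
    by_contra! hall
    exact htan (Finset.eq_singleton_iff_unique_mem.mpr ⟨hPl, hall⟩)
  obtain ⟨hRK, hRl⟩ := mem_pointsIn.mp hR
  rw [← sup_point_eq_of_mem_covers hl (hK.finrank_eq_one R hRK) (hK.not_le hP hRK hRP) hRl,
    hK.card_pointsIn_secant hP hRK hRP.symm]

theorem IsPointCap.card_tangents_add_card_pointsIn (hK : IsPointCap K) (hP : P ∈ K) (hPX : P ≤ X) :
    (tangents K P X).card + (pointsIn K X).card = (covers P X).card + 1 := by
  have hsum := sum_covers_card_pointsIn_add hK.finrank_eq_one hPX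
  rw [hK.pointsIn_point hP, Finset.card_singleton, mul_one] at hsum
  have two_per_line : ∑ l ∈ covers P X, ((pointsIn K l).card
      + if pointsIn K l = {P} then 1 else 0) = ∑ l ∈ covers P X, 2 := by
    refine Finset.sum_congr rfl fun l hl => ?_
    split_ifs with h
    · rw [h, Finset.card_singleton]
    · exact hK.card_pointsIn_of_notMem_tangents hP hl h
  rw [Finset.sum_add_distrib, ← Finset.card_filter, Finset.sum_const, smul_eq_mul] at two_per_line
  rw [tangents]
  omega

variable [Fintype F]

local notation "q" => Fintype.card F

theorem IsPointCap.card_tangents_plane (hK : IsPointCap K) (hX : finrank F X = 3) (hP : P ∈ K)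
    (hPX : P ≤ X) : (tangents K P X).card + (pointsIn K X).card = q + 2 := by
  rw [hK.card_tangents_add_card_pointsIn hP hPX,
    card_covers_two hPX (by rw [hX, hK.finrank_eq_one P hP])]

theorem IsPointCap.card_tangents_solid (hK : IsPointCap K) (hX : finrank F X = 4) (hP : P ∈ K)
    (hPX : P ≤ X) : (tangents K P X).card + (pointsIn K X).card = q ^ 2 + q + 2 := by
  rw [hK.card_tangents_add_card_pointsIn hP hPX,
    card_covers_three hPX (by rw [hX, hK.finrank_eq_one P hP])]

theorem IsPointCap.card_pointsIn_plane_le (hK : IsPointCap K) (hX : finrank F X = 3) :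
    (pointsIn K X).card ≤ q + 2 := by
  rcases (pointsIn K X).eq_empty_or_nonempty with h | ⟨P, hP⟩
  · simp [h]
  · obtain ⟨hP, hPX⟩ := mem_pointsIn.mp hP
    exact (hK.card_tangents_plane hX hP hPX).le.trans' (Nat.le_add_left _ _)

end Tangents

section PlaneLemma

variable {F V : Type*} [Field F] [AddCommGroup V] [Module F V]

theorem exists_eq_span_singleton_of_point_le {P W : Submodule F V} (hP : finrank F P = 1)
    (hPW : P ≤ W) : ∃ w : W, P = F ∙ (w : V) := by
  obtain ⟨v, hv0, -⟩ := finrank_eq_one_iff'.mp hP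
  refine ⟨⟨v, hPW v.2⟩, (eq_of_point_le (finrank_span_singleton ?_) hP ?_).symm⟩
  · simpa using hv0
  · simp

theorem det_equivFun_eq_zero_iff {W : Submodule F V} (b : Basis (Fin 3) F W) (u v w : W) :
    (Matrix.of ![b.equivFun u, b.equivFun v, b.equivFun w]).det = 0
      ↔ finrank F ↥(F ∙ (u : V) ⊔ F ∙ (v : V) ⊔ F ∙ (w : V)) ≠ 3 := by
  have hspan : Submodule.span F (Set.range ![(u : V), v, w])
      = F ∙ (u : V) ⊔ F ∙ (v : V) ⊔ F ∙ (w : V) := by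
    simp only [Matrix.range_cons, Matrix.range_empty, Set.union_empty, Submodule.span_union,
      sup_assoc]
  have hrows : (Matrix.of ![b.equivFun u, b.equivFun v, b.equivFun w]).row
      = b.equivFun.toLinearMap ∘ ![u, v, w] := by ext i; fin_cases i <;> rfl
  have hcoe : ![(u : V), v, w] = W.subtype ∘ ![u, v, w] := by ext i; fin_cases i <;> rfl
  rw [← hspan, ← not_iff_not, not_not, ← ne_eq, ← isUnit_iff_ne_zero,
    ← Matrix.isUnit_iff_isUnit_det, ← Matrix.linearIndependent_rows_iff_isUnit, hrows,
    LinearMap.linearIndependent_iff _ (LinearEquiv.ker _),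
    ← LinearMap.linearIndependent_iff W.subtype (Submodule.ker_subtype W), ← hcoe,
    linearIndependent_iff_card_eq_finrank_span, Set.finrank, Fintype.card_fin, eq_comm]

theorem exists_coordinates [FiniteDimensional F V] {W : Submodule F V} (hW : finrank F W = 3) :
    ∃ x : Submodule F V → Fin 3 → F, ∀ P Q R : Submodule F V, finrank F P = 1 → finrank F Q = 1 →
      finrank F R = 1 → P ≤ W → Q ≤ W → R ≤ W → P ≠ Q → (bracket x P Q R = 0 ↔ R ≤ P ⊔ Q) := by
  have hspan (P : Submodule F V) : ∃ w : W, finrank F P = 1 → P ≤ W → P = F ∙ (w : V) := by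
    by_cases h : finrank F P = 1 ∧ P ≤ W
    · obtain ⟨w, hw⟩ := exists_eq_span_singleton_of_point_le h.1 h.2
      exact ⟨w, fun _ _ => hw⟩
    · exact ⟨0, fun h1 h2 => absurd ⟨h1, h2⟩ h⟩
  choose w hw using hspan
  let b : Basis (Fin 3) F W := finBasisOfFinrankEq F W hW
  refine ⟨fun P => b.equivFun (w P), fun P Q R hP hQ hR hPW hQW hRW hPQ => ?_⟩
  rw [bracket, det_equivFun_eq_zero_iff, ← hw P hP hPW, ← hw Q hQ hQW, ← hw R hR hRW]
  have hline := finrank_sup_of_points hP hQ hPQ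
  constructor
  · refine fun h => by_contra fun hle => h ?_
    rw [finrank_sup_point hR hle, hline]
  · intro h
    rw [sup_eq_left.mpr h, hline]
    decide

variable [Finite V] [Fintype F] [CharP F 2] {K : Finset (Submodule F V)} {Q W : Submodule F V}

local notation "q" => Fintype.card F

theorem IsPointCap.card_tangentPoints_add_card_le (hK : IsPointCap K) (hW : finrank F W = 3)
    (hKW : ∀ P ∈ K, P ≤ W) (hQ : finrank F Q = 1) (hQK : Q ∉ K) (hsec : OnSecant K Q) :
    (tangentPoints K Q).card + K.card ≤ q + 2 := by
  have hQW := hsec.le hKW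
  obtain ⟨A, hA, B, hB, hAB, hQAB⟩ := hsec
  have hAtan := hK.notMem_tangentPoints hA hB hAB hQ hQK hQAB
  have hBtan := hK.notMem_tangentPoints hB hA hAB.symm hQ hQK (sup_comm A B ▸ hQAB)
  have hKle := hK.card_pointsIn_plane_le hW
  rw [pointsIn_eq_self hKW] at hKle
  by_contra! hlt
  obtain ⟨T, hT, hTcard⟩ := Finset.exists_subset_card_eq
    (show q + 3 - K.card ≤ (tangentPoints K Q).card by omega)
  obtain ⟨x, hx⟩ := exists_coordinates hW
  have bracket_Q : ∀ P ∈ K, ∀ z ∈ K, (bracket x P Q z = 0 ↔ z ≤ P ⊔ Q) := fun P hP z hz =>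
    hx P Q z (hK.finrank_eq_one P hP) hQ (hK.finrank_eq_one z hz) (hKW P hP) hQW (hKW z hz)
      fun h => hQK (h ▸ hP)
  refine IsArc.card_add_card_ne_of_tangent (x := x) (Q := Q) ?_ hA hB
    (hT.trans (tangentPoints_subset K Q)) (fun h => hAtan (hT h)) (fun h => hBtan (hT h)) hAB
    (Finset.card_pos.mp (by omega)) ?_ ?_ ?_ (by omega : T.card + K.card = q + 3)
  · intro a ha b hb c hc hab hac hbc
    rw [Ne, hx a b c (hK.finrank_eq_one a ha) (hK.finrank_eq_one b hb) (hK.finrank_eq_one c hc)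
      (hKW a ha) (hKW b hb) (hKW c hc) hab]
    exact hK.not_le_sup a ha b hb c hc hab hac hbc
  · exact (bracket_Q A hA B hB).mpr (hK.le_sup_of_le_secant hA hB hQ hQK hQAB)
  · intro z hz hzA hzB
    rw [Ne, bracket_Q A hA z hz]
    exact fun h => hK.not_le_sup A hA B hB z hz hAB hzA.symm hzB.symm
      (h.trans (sup_le le_sup_left hQAB))
  · intro a ha z hz hza
    obtain ⟨haK, hatan⟩ := mem_tangentPoints.mp (hT ha)
    rw [Ne, bracket_Q a haK z hz]
    exact hatan z hz hza

end PlaneLemma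

section SecantPlanes

variable {F V : Type*} [Field F] [Fintype F] [CharP F 2] [AddCommGroup V] [Module F V] [Finite V]
  {K : Finset (Submodule F V)} {Q W : Submodule F V}

local notation "q" => Fintype.card F

theorem IsPointCap.card_tangentPoints_plane_le (hK : IsPointCap K) (hW : finrank F W = 3)
    (hQ : finrank F Q = 1) (hQK : Q ∉ K) (hsec : OnSecant (pointsIn K W) Q) :
    (pointsIn (tangentPoints K Q) W).card + (pointsIn K W).card ≤ q + 2 := by
  have hKW : ∀ P ∈ pointsIn K W, P ≤ W := fun P hP => (mem_pointsIn.mp hP).2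
  rw [← tangentPoints_pointsIn (hsec.le hKW)]
  exact (hK.pointsIn W).card_tangentPoints_add_card_le hW hKW hQ
    (fun h => hQK (mem_pointsIn.mp h).1) hsec

theorem IsPointCap.card_tangentPoints_le_of_secant (hK : IsPointCap K) {A B : Submodule F V}
    (hA : A ∈ K) (hB : B ∈ K) (hAB : A ≠ B) (hQ : finrank F Q = 1) (hQK : Q ∉ K)
    (hQAB : Q ≤ A ⊔ B) (h : A ⊔ B ≤ W) :
    (pointsIn (tangentPoints K Q) W).card + (pointsIn K W).card
      ≤ q * (covers (A ⊔ B) W).card + 2 := by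
  have sum_K := sum_covers_card_pointsIn_add hK.finrank_eq_one h
  have sum_tan := sum_covers_card_pointsIn_add (K := tangentPoints K Q)
    (fun P hP => hK.finrank_eq_one P (tangentPoints_subset K Q hP)) h
  rw [hK.pointsIn_tangentPoints_secant hA hB hAB hQ hQK hQAB, Finset.card_empty, mul_zero]
    at sum_tan
  rw [hK.card_pointsIn_secant hA hB hAB] at sum_K
  have per_plane : ∑ X ∈ covers (A ⊔ B) W, ((pointsIn (tangentPoints K Q) X).card
      + (pointsIn K X).card) ≤ ∑ X ∈ covers (A ⊔ B) W, (q + 2) := by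
    refine Finset.sum_le_sum fun X hX => ?_
    obtain ⟨hABX, -, hX⟩ := mem_covers.mp hX
    rw [finrank_sup_of_points (hK.finrank_eq_one A hA) (hK.finrank_eq_one B hB) hAB] at hX
    exact hK.card_tangentPoints_plane_le hX hQ hQK (.pointsIn hA hB hAB hQAB hABX)
  rw [Finset.sum_add_distrib, Finset.sum_const, smul_eq_mul] at per_plane
  linarith

theorem IsPointCap.card_tangentPoints_solid_le (hK : IsPointCap K) (hW : finrank F W = 4)
    (hQ : finrank F Q = 1) (hQK : Q ∉ K) (hsec : OnSecant (pointsIn K W) Q) :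
    (pointsIn (tangentPoints K Q) W).card + (pointsIn K W).card
      ≤ q ^ 2 + q + 2 := by
  obtain ⟨A, hA, B, hB, hAB, hQAB⟩ := hsec
  obtain ⟨⟨hA, hAW⟩, hB, hBW⟩ := And.intro (mem_pointsIn.mp hA) (mem_pointsIn.mp hB)
  have hle := hK.card_tangentPoints_le_of_secant hA hB hAB hQ hQK hQAB (sup_le hAW hBW)
  rw [card_covers_two (sup_le hAW hBW) (by
    rw [hW, finrank_sup_of_points (hK.finrank_eq_one A hA) (hK.finrank_eq_one B hB) hAB])] at hle
  linarith

end SecantPlanes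

section LinearSpace

variable {α β : Type*} {T : Finset α} {B : Finset β} {I : α → β → Prop}

/-- `T` is the point set of a finite linear space with incidence relation `I`: any two distinct
points of `T` lie on exactly one block of `B`. -/
def IsLinearSpace (T : Finset α) (B : Finset β) (I : α → β → Prop) : Prop :=
  ∀ x ∈ T, ∀ y ∈ T, x ≠ y → ∃! b, b ∈ B ∧ I x b ∧ I y b

open Classical in
theorem sum_sum_filter_eq_sum_card_mul (R : Finset α) (B : Finset β) (I : α → β → Prop)
    (f : β → ℕ) :
    ∑ y ∈ R, ∑ b ∈ B.filter (I y ·), f b = ∑ b ∈ B, (R.filter (I · b)).card * f b := by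
  simp_rw [Finset.card_eq_sum_ones, Finset.sum_mul, one_mul, Finset.sum_filter]
  exact Finset.sum_comm

theorem IsLinearSpace.block_unique (h : IsLinearSpace T B I) {x y : α} {b b' : β} (hx : x ∈ T)
    (hy : y ∈ T) (hxy : x ≠ y) (hb : b ∈ B) (hxb : I x b) (hyb : I y b) (hb' : b' ∈ B)
    (hxb' : I x b') (hyb' : I y b') : b = b' :=
  (h x hx y hy hxy).unique ⟨hb, hxb, hyb⟩ ⟨hb', hxb', hyb'⟩

open Classical in
theorem IsLinearSpace.sum_card_sub_one (h : IsLinearSpace T B I) {x : α} (hx : x ∈ T) :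
    ∑ b ∈ B.filter (I x ·), ((T.filter (I · b)).card - 1) = T.card - 1 := by
  have block_erase : ∀ b ∈ B.filter (I x ·),
      (T.filter (I · b)).card - 1 = ((T.erase x).filter (I · b)).card := by
    intro b hb
    rw [Finset.filter_erase, Finset.card_erase_of_mem]
    exact Finset.mem_filter.mpr ⟨hx, (Finset.mem_filter.mp hb).2⟩
  rw [Finset.sum_congr rfl block_erase, ← Finset.card_erase_of_mem hx, Finset.card_eq_sum_ones]
  refine (Finset.sum_card_bipartiteAbove_eq_sum_card_bipartiteBelow fun b y => I y b).trans
    (Finset.sum_congr rfl fun y hy => ?_)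
  obtain ⟨hyx, hy⟩ := Finset.mem_erase.mp hy
  obtain ⟨b, ⟨hb, hxb, hyb⟩, huniq⟩ := h x hx y hy hyx.symm
  refine Finset.card_eq_one.mpr ⟨b, Finset.eq_singleton_iff_unique_mem.mpr ?_⟩
  simp only [Finset.bipartiteBelow, Finset.mem_filter]
  exact ⟨⟨⟨hb, hxb⟩, hyb⟩, fun b' ⟨⟨hb', hxb'⟩, hyb'⟩ => huniq b' ⟨hb', hxb', hyb'⟩⟩

open Classical in
theorem IsLinearSpace.card_filter_filter_le_one (h : IsLinearSpace T B I) {b b' : β} (hb : b ∈ B)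
    (hb' : b' ∈ B) (hne : b ≠ b') : ((T.filter (I · b)).filter (I · b')).card ≤ 1 := by
  refine Finset.card_le_one.mpr fun x hx y hy => by_contra fun hxy => hne ?_
  simp only [Finset.mem_filter] at hx hy
  exact h.block_unique hx.1.1 hy.1.1 hxy hb hx.1.2 hy.1.2 hb' hx.2 hy.2

open Classical in
theorem IsLinearSpace.sum_sum_sq_le (h : IsLinearSpace T B I) {b : β} (hb : b ∈ B) :
    ∑ y ∈ T.filter (I · b), ∑ b' ∈ (B.erase b).filter (I y ·), ((T.filter (I · b')).card - 1) ^ 2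
      ≤ (T.filter (¬I · b)).card * (T.card - 1) := by
  set w : β → ℕ := fun b' => (T.filter (I · b')).card - 1 with hw
  set M := T.filter (I · b)
  set N := T.filter (¬I · b)
  have card_block (b' : β) :
      (M.filter (I · b')).card + (N.filter (I · b')).card = (T.filter (I · b')).card := by
    simp only [M, N]
    rw [Finset.filter_comm, Finset.filter_comm (fun x => ¬I x b)]
    exact Finset.card_filter_add_card_filter_not _
  have pointwise : ∀ b' ∈ B.erase b,
      (M.filter (I · b')).card * w b' ^ 2 ≤ (N.filter (I · b')).card * w b' := by
    intro b' hb'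
    have hM := h.card_filter_filter_le_one hb (Finset.mem_of_mem_erase hb')
      (Finset.ne_of_mem_erase hb').symm
    have : (M.filter (I · b')).card * w b' ≤ (N.filter (I · b')).card := by
      simp only [hw, ← card_block]
      interval_cases (M.filter (I · b')).card <;> simp
    rw [sq, ← mul_assoc]
    exact Nat.mul_le_mul_right _ this
  calc ∑ y ∈ M, ∑ b' ∈ (B.erase b).filter (I y ·), w b' ^ 2
      = ∑ b' ∈ B.erase b, (M.filter (I · b')).card * w b' ^ 2 :=
        sum_sum_filter_eq_sum_card_mul M (B.erase b) I _
    _ ≤ ∑ b' ∈ B.erase b, (N.filter (I · b')).card * w b' := Finset.sum_le_sum pointwise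
    _ ≤ ∑ b' ∈ B, (N.filter (I · b')).card * w b' :=
        Finset.sum_le_sum_of_subset (Finset.erase_subset _ _)
    _ = ∑ z ∈ N, ∑ b' ∈ B.filter (I z ·), w b' := (sum_sum_filter_eq_sum_card_mul N B I w).symm
    _ = N.card * (T.card - 1) := by
        rw [Finset.sum_congr rfl fun z hz => h.sum_card_sub_one (Finset.mem_filter.mp hz).1,
          Finset.sum_const, smul_eq_mul]

variable {q : ℕ}

open Classical in
theorem IsLinearSpace.exists_lt_two_mul_card (h : IsLinearSpace T B I) (ht : T.card + 1 ≤ 2 * q)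
    {x : α} (hx : x ∈ T) (hsq : q ^ 2 + q + 1 ≤ T.card
      + ∑ b ∈ B.filter (I x ·), ((T.filter (I · b)).card - 1) ^ 2) :
    ∃ b ∈ B, I x b ∧ q < 2 * ((T.filter (I · b)).card - 1) := by
  by_contra! hcon
  have sq_le : 2 * ∑ b ∈ B.filter (I x ·), ((T.filter (I · b)).card - 1) ^ 2
      ≤ q * ∑ b ∈ B.filter (I x ·), ((T.filter (I · b)).card - 1) := by
    rw [Finset.mul_sum, Finset.mul_sum]
    refine Finset.sum_le_sum fun b hb => ?_
    have := hcon b (Finset.mem_filter.mp hb).1 (Finset.mem_filter.mp hb).2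
    nlinarith
  rw [h.sum_card_sub_one hx] at sq_le
  obtain ⟨t, ht'⟩ : ∃ t, T.card = t + 1 :=
    Nat.exists_eq_succ_of_ne_zero (Finset.card_ne_zero_of_mem hx)
  rw [ht'] at ht hsq sq_le
  rw [Nat.add_sub_cancel] at sq_le
  nlinarith

theorem le_succ_of_mul_le_add {s t : ℕ} (ht : t + 1 ≤ 2 * q) (hs : q < 2 * s) (hst : s + 1 ≤ t)
    (h : (s + 1) * (q ^ 2 + q + 1)
      ≤ (s + 1) * t + (s + 1) * s ^ 2 + (t - (s + 1)) * (t - 1)) :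
    q ≤ s + 1 := by
  by_contra! hcon
  obtain ⟨j, rfl⟩ : ∃ j, q = s + 2 + j := Nat.exists_eq_add_of_le hcon
  obtain ⟨u, rfl⟩ := Nat.exists_eq_add_of_le hst
  obtain ⟨i, rfl⟩ : ∃ i, s = j + 3 + i := Nat.exists_eq_add_of_le (by omega)
  rw [Nat.add_sub_cancel_left, show j + 3 + i + 1 + u - 1 = j + 3 + i + u by omega] at h
  have hu : u ≤ 3 * j + i + 5 := by omega
  have tail_le : u * (j + 3 + i + u) ≤ (3 * j + i + 5) * (j + 3 + i + (3 * j + i + 5)) := by gcongr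
  have head_le : (j + 3 + i + 1) * (j + 3 + i + 1 + u)
      ≤ (j + 3 + i + 1) * (j + 3 + i + 1 + (3 * j + i + 5)) := by gcongr
  have pos : 0 < 3 * j ^ 3 + 5 * (i * j ^ 2) + 2 * (i ^ 2 * j) + 12 * j ^ 2 + 13 * (i * j) + i ^ 2
    + 17 * j + 7 * i + 12 := by positivity
  linarith

open Classical in
theorem IsLinearSpace.exists_le_card_block (h : IsLinearSpace T B I) (ht : T.card + 1 ≤ 2 * q)
    (hsq : ∀ x ∈ T, q ^ 2 + q + 1 ≤ T.card
      + ∑ b ∈ B.filter (I x ·), ((T.filter (I · b)).card - 1) ^ 2) {x : α} (hx : x ∈ T) :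
    ∃ b ∈ B, I x b ∧ q ≤ (T.filter (I · b)).card := by
  obtain ⟨b, hb, hxb, hqb⟩ := h.exists_lt_two_mul_card ht hx (hsq x hx)
  refine ⟨b, hb, hxb, ?_⟩
  obtain ⟨s, hs⟩ : ∃ s, (T.filter (I · b)).card = s + 1 :=
    Nat.exists_eq_succ_of_ne_zero (Finset.card_ne_zero_of_mem (Finset.mem_filter.mpr ⟨hx, hxb⟩))
  have hsplit : (T.filter (I · b)).card + (T.filter (¬I · b)).card = T.card :=
    Finset.card_filter_add_card_filter_not _
  have hrest : (T.filter (¬I · b)).card = T.card - (s + 1) := by omega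
  have hle := Finset.sum_le_sum (s := T.filter (I · b))
    fun y hy => hsq y (Finset.mem_filter.mp hy).1
  have split_block : ∀ y ∈ T.filter (I · b),
      ∑ b' ∈ B.filter (I y ·), ((T.filter (I · b')).card - 1) ^ 2 = s ^ 2
        + ∑ b' ∈ (B.erase b).filter (I y ·), ((T.filter (I · b')).card - 1) ^ 2 := by
    intro y hy
    rw [Finset.filter_erase, ← Finset.add_sum_erase _ _
      (Finset.mem_filter.mpr ⟨hb, (Finset.mem_filter.mp hy).2⟩), hs, Nat.add_sub_cancel]
  have hsq_le := h.sum_sum_sq_le hb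
  rw [Finset.sum_const, Finset.sum_add_distrib, Finset.sum_congr rfl split_block,
    Finset.sum_add_distrib] at hle
  simp only [Finset.sum_const, smul_eq_mul, hs] at hle
  rw [hs]
  rw [hrest] at hsq_le
  rw [hs] at hqb
  exact le_succ_of_mul_le_add ht (by omega) (by omega) (by linarith)

open Classical in
theorem IsLinearSpace.card_filter_le_two (h : IsLinearSpace T B I) {b₁ b₂ b : β} (hb₁ : b₁ ∈ B)
    (hb₂ : b₂ ∈ B) (hcover : ∀ z ∈ T, I z b₁ ∨ I z b₂) (hb : b ∈ B) (h₁ : b ≠ b₁) (h₂ : b ≠ b₂) :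
    (T.filter (I · b)).card ≤ 2 := by
  have hsub : T.filter (I · b)
      ⊆ (T.filter (I · b)).filter (I · b₁) ∪ (T.filter (I · b)).filter (I · b₂) := by
    intro z hz
    have := hcover z (Finset.mem_filter.mp hz).1
    simp only [Finset.mem_union, Finset.mem_filter] at hz ⊢
    tauto
  calc (T.filter (I · b)).card
      ≤ _ := (Finset.card_le_card hsub).trans (Finset.card_union_le _ _)
    _ ≤ 1 + 1 := Nat.add_le_add (h.card_filter_filter_le_one hb hb₁ h₁)
        (h.card_filter_filter_le_one hb hb₂ h₂)

open Classical in
theorem IsLinearSpace.false_of_two_blocks (h : IsLinearSpace T B I) (ht : T.card + 1 = 2 * q)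
    {b₁ b₂ : β} (hb₁ : b₁ ∈ B) (hb₂ : b₂ ∈ B) (hcover : ∀ z ∈ T, I z b₁ ∨ I z b₂)
    (hcard : (T.filter (I · b₁)).card = q) {x : α} (hx : x ∈ T) (hxb₁ : I x b₁) (hxb₂ : ¬I x b₂)
    (hsq : q ^ 2 + q + 1 ≤ T.card
      + ∑ b ∈ B.filter (I x ·), ((T.filter (I · b)).card - 1) ^ 2) : False := by
  have hsum := h.sum_card_sub_one hx
  have hmem : b₁ ∈ B.filter (I x ·) := Finset.mem_filter.mpr ⟨hb₁, hxb₁⟩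
  have sq_le : ∑ b ∈ (B.filter (I x ·)).erase b₁, ((T.filter (I · b)).card - 1) ^ 2
      ≤ ∑ b ∈ (B.filter (I x ·)).erase b₁, ((T.filter (I · b)).card - 1) := by
    refine Finset.sum_le_sum fun b hb => ?_
    obtain ⟨hne, hb⟩ := Finset.mem_erase.mp hb
    obtain ⟨hb, hxb⟩ := Finset.mem_filter.mp hb
    have hle := h.card_filter_le_two hb₁ hb₂ hcover hb hne fun h' => hxb₂ (h' ▸ hxb)
    interval_cases (T.filter (I · b)).card <;> simp
  rw [← Finset.add_sum_erase _ _ hmem, hcard] at hsum hsq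
  obtain ⟨p, rfl⟩ : ∃ p, q = p + 1 := Nat.exists_eq_add_of_le' (by omega)
  have htp : T.card = 2 * p + 1 := by omega
  rw [htp, Nat.add_sub_cancel, Nat.add_sub_cancel] at hsum
  rw [htp, Nat.add_sub_cancel] at hsq
  nlinarith

open Classical in
theorem IsLinearSpace.exists_block (h : IsLinearSpace T B I) (ht : T.card + 1 ≤ 2 * q)
    (hsq : ∀ x ∈ T, q ^ 2 + q + 1 ≤ T.card
      + ∑ b ∈ B.filter (I x ·), ((T.filter (I · b)).card - 1) ^ 2) (hne : T.Nonempty) :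
    ∃ b ∈ B, ∀ x ∈ T, I x b := by
  obtain ⟨x, hx⟩ := hne
  obtain ⟨b₁, hb₁, hxb₁, hq₁⟩ := h.exists_le_card_block ht hsq hx
  refine ⟨b₁, hb₁, by_contra fun hcon => ?_⟩
  push Not at hcon
  obtain ⟨y, hy, hyb₁⟩ := hcon
  obtain ⟨b₂, hb₂, hyb₂, hq₂⟩ := h.exists_le_card_block ht hsq hy
  have hinter := h.card_filter_filter_le_one hb₁ hb₂ fun h' => hyb₁ (h' ▸ hyb₂)
  rw [Finset.filter_filter] at hinter
  have hunion := Finset.card_union_add_card_inter (T.filter (I · b₁)) (T.filter (I · b₂))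
  rw [← Finset.filter_or, ← Finset.filter_and] at hunion
  have hsub := Finset.filter_subset (fun z => I z b₁ ∨ I z b₂) T
  have hle := Finset.card_le_card hsub
  have hcover := Finset.filter_eq_self.mp (Finset.eq_of_subset_of_card_le hsub (by omega))
  obtain ⟨z, hz, hzb₂⟩ : ∃ z ∈ T.filter (I · b₁), ¬I z b₂ := by
    by_contra! hall
    rw [← Finset.filter_filter, Finset.filter_true_of_mem hall] at hinter
    exact hyb₁ (Finset.card_le_one.mp (by omega) x hx y hy ▸ hxb₁)
  obtain ⟨hz, hzb₁⟩ := Finset.mem_filter.mp hz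
  exact h.false_of_two_blocks (q := q) (by omega) hb₁ hb₂ hcover (by omega) hz hzb₁ hzb₂ (hsq z hz)

end LinearSpace

section TangentLines

variable {F V : Type*} [Field F] [AddCommGroup V] [Module F V] [Finite V]
  {K : Finset (Submodule F V)} {P Q R l m W X : Submodule F V}

open Classical in
theorem tangents_eq_filter (h : X ≤ W) : tangents K P X = (tangents K P W).filter (· ≤ X) := by
  ext l
  simp only [Finset.mem_filter, mem_tangents, mem_covers]
  exact ⟨fun ⟨⟨hP, hX, hl⟩, htan⟩ => ⟨⟨⟨hP, hX.trans h, hl⟩, htan⟩, hX⟩,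
    fun ⟨⟨⟨hP, _, hl⟩, htan⟩, hX⟩ => ⟨⟨hP, hX, hl⟩, htan⟩⟩

theorem tangents_mono (h : X ≤ W) : tangents K P X ⊆ tangents K P W := by
  classical
  exact tangents_eq_filter (K := K) h ▸ Finset.filter_subset _ _

theorem not_le_of_mem_tangents (hl : l ∈ tangents K P W) (hR : R ∈ K) (hne : R ≠ P) : ¬R ≤ l := by
  intro hRl
  have := mem_pointsIn.mpr ⟨hR, hRl⟩
  rw [(mem_tangents.mp hl).2, Finset.mem_singleton] at this
  exact hne this

theorem IsPointCap.finrank_tangent (hK : IsPointCap K) (hP : P ∈ K) (hl : l ∈ tangents K P W) :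
    finrank F l = 2 := by
  rw [(mem_covers.mp (mem_tangents.mp hl).1).2.2, hK.finrank_eq_one P hP]

/-- Each tangent at `R` in the plane `l ⊔ R` meets the tangent `l` at `P` in a point from which `R`
is seen as a point of contact. -/
theorem IsPointCap.card_tangents_sup_le (hK : IsPointCap K) (hP : P ∈ K) (hl : l ∈ tangents K P W)
    (hR : R ∈ K) (hne : R ≠ P) :
    (tangents K R (l ⊔ R)).card
      ≤ (((covers ⊥ l).erase P).filter fun Q => R ∈ tangentPoints K Q).card := by
  have hR1 := hK.finrank_eq_one R hR
  have hl2 := hK.finrank_tangent hP hl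
  have hRl := not_le_of_mem_tangents hl hR hne
  have hplane : finrank F ↥(l ⊔ R) = 3 := by rw [finrank_sup_point hR1 hRl, hl2]
  have meet : ∀ m ∈ tangents K R (l ⊔ R), finrank F ↥(m ⊓ l) = 1 ∧ R ⊔ m ⊓ l = m := by
    intro m hm
    obtain ⟨hRm, hmle, -⟩ := mem_covers.mp (mem_tangents.mp hm).1
    have hm2 := hK.finrank_tangent hR hm
    have hpoint := finrank_inf_add_one_of_ne (hplane.trans (by rw [hm2]))
      (hplane.trans (by rw [hl2])) hmle le_sup_left fun h => hRl (h ▸ hRm)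
    rw [hm2, Nat.succ_inj] at hpoint
    exact ⟨hpoint, line_eq_sup_of_points hR1 hpoint hm2.le (fun h => hRl (h ▸ inf_le_right)) hRm
      inf_le_left⟩
  refine Finset.card_le_card_of_injOn (· ⊓ l) (fun m hm => ?_) fun m hm m' hm' h => ?_
  · obtain ⟨hpoint, hsup⟩ := meet m hm
    simp only [Finset.coe_filter, Finset.mem_erase, Set.mem_ofPred_eq, mem_covers_bot,
      mem_tangentPoints_iff_pointsIn_eq, hsup]
    exact ⟨⟨fun h => not_le_of_mem_tangents hm hP hne.symm (h ▸ inf_le_left), inf_le_right, hpoint⟩,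
      (mem_tangents.mp hm).2⟩
  · rw [← (meet m hm).2, show m ⊓ l = m' ⊓ l from h, (meet m' hm').2]

theorem IsPointCap.sum_card_tangents_sup_eq [Finite F] (hK : IsPointCap K) (hKW : ∀ R ∈ K, R ≤ W)
    (hP : P ∈ K) (hl : l ∈ tangents K P W) :
    ∑ R ∈ K.erase P, (tangents K R (l ⊔ R)).card
      = ∑ X ∈ covers l W, ((pointsIn K X).card - 1) * (tangents K P X).card := by
  have := Fintype.ofFinite F
  obtain ⟨hPl, hlW, -⟩ := mem_covers.mp (mem_tangents.mp hl).1
  have off_line : ∀ R ∈ K.erase P, finrank F R = 1 ∧ ¬R ≤ l ∧ R ≤ W := fun R hR =>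
    have hRK := Finset.mem_of_mem_erase hR
    ⟨hK.finrank_eq_one R hRK, not_le_of_mem_tangents hl hRK (Finset.ne_of_mem_erase hR),
      hKW R hRK⟩
  rw [← Finset.sum_fiberwise_of_maps_to (t := covers l W) (g := fun R => l ⊔ R) fun R hR =>
    sup_point_mem_covers hlW (off_line R hR).1 (off_line R hR).2.1 (off_line R hR).2.2]
  refine Finset.sum_congr rfl fun X hX => ?_
  obtain ⟨hlX, -, hX3⟩ := mem_covers.mp hX
  rw [hK.finrank_tangent hP hl] at hX3
  have hPX := hPl.trans hlX
  have fiber : (K.erase P).filter (fun R => l ⊔ R = X) = (pointsIn K X).erase P := by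
    ext R
    simp only [Finset.mem_filter, Finset.mem_erase, mem_pointsIn, and_assoc]
    refine and_congr_right fun hne => and_congr_right fun hR => ?_
    have ⟨hR1, hRl, _⟩ := off_line R (Finset.mem_erase.mpr ⟨hne, hR⟩)
    exact sup_point_eq_iff hX hR1 hRl
  have same_degree : ∀ R ∈ (K.erase P).filter (fun R => l ⊔ R = X),
      (tangents K R (l ⊔ R)).card = (tangents K P X).card := by
    intro R hR
    obtain ⟨hR', rfl⟩ := Finset.mem_filter.mp hR
    have := hK.card_tangents_plane hX3 (Finset.mem_of_mem_erase hR') le_sup_right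
    have := hK.card_tangents_plane hX3 hP hPX
    omega
  rw [Finset.sum_congr rfl same_degree, Finset.sum_const, smul_eq_mul, fiber,
    Finset.card_erase_of_mem (mem_pointsIn.mpr ⟨hP, hPX⟩)]

theorem IsPointCap.card_filter_tangentPoints_add_one_le [Finite F] [CharP F 2] (hK : IsPointCap K)
    (hW : finrank F W = 4) (hKW : ∀ R ∈ K, R ≤ W) (hcomp : IsCompleteIn K W)
    (hP : P ∈ K) (hl : l ∈ tangents K P W) (hQ : Q ∈ (covers ⊥ l).erase P) :
    ((K.erase P).filter (· ∈ tangentPoints K Q)).card + 1 ≤ (tangents K P W).card := by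
  have := Fintype.ofFinite F
  obtain ⟨⟨hPl, hlW, -⟩, htan⟩ := (mem_tangents.mp hl).imp_left mem_covers.mp
  obtain ⟨hQP, hQ⟩ := Finset.mem_erase.mp hQ
  obtain ⟨hQl, hQ1⟩ := mem_covers_bot.mp hQ
  have hQK : Q ∉ K := fun h => not_le_of_mem_tangents hl h hQP hQl
  have hbound := hK.card_tangentPoints_solid_le hW hQ1 hQK
    (by rw [pointsIn_eq_self hKW]; exact hcomp Q hQ1 (hQl.trans hlW) hQK)
  have hdeg := hK.card_tangents_solid hW hP (hKW P hP)
  rw [pointsIn_eq_self fun R hR => hKW R (tangentPoints_subset K Q hR)] at hbound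
  have hPQ : P ∈ tangentPoints K Q := by
    rwa [mem_tangentPoints_iff_pointsIn_eq, line_eq_sup_of_points (hK.finrank_eq_one P hP) hQ1
      (hK.finrank_tangent hP hl).le hQP.symm hPl hQl]
  have herase : (K.erase P).filter (· ∈ tangentPoints K Q) = (tangentPoints K Q).erase P := by
    rw [Finset.filter_erase, Finset.filter_mem_eq_inter,
      Finset.inter_eq_right.mpr (tangentPoints_subset K Q)]
  rw [herase, Finset.card_erase_add_one hPQ]
  omega

variable [Fintype F]

local notation "q" => Fintype.card F

theorem IsPointCap.tangents_plane_identity (hK : IsPointCap K) (hP : P ∈ K)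
    (hl : l ∈ tangents K P W) (hX : X ∈ covers l W) :
    (tangents K P X).card + (pointsIn K X).card = q + 2
      ∧ ((pointsIn K X).card - 1) * (tangents K P X).card + ((tangents K P X).card - 1) ^ 2
        + (tangents K P X).card = q * (tangents K P X).card + 1 := by
  classical
  obtain ⟨hlX, hXW, hX3⟩ := mem_covers.mp hX
  rw [hK.finrank_tangent hP hl] at hX3
  have hPX := (mem_covers.mp (mem_tangents.mp hl).1).1.trans hlX
  have hcard := hK.card_tangents_plane hX3 hP hPX
  have hlmem : l ∈ tangents K P X :=
    tangents_eq_filter (K := K) hXW ▸ Finset.mem_filter.mpr ⟨hl, hlX⟩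
  obtain ⟨t, ht⟩ : ∃ t, (tangents K P X).card = t + 1 :=
    Nat.exists_eq_succ_of_ne_zero (Finset.card_ne_zero_of_mem hlmem)
  obtain ⟨k, hk⟩ : ∃ k, (pointsIn K X).card = k + 1 :=
    Nat.exists_eq_succ_of_ne_zero (Finset.card_ne_zero_of_mem (mem_pointsIn.mpr ⟨hP, hPX⟩))
  refine ⟨hcard, ?_⟩
  rw [ht, hk] at hcard ⊢
  rw [show q = t + k by omega, Nat.add_sub_cancel, Nat.add_sub_cancel]
  ring

variable [CharP F 2]

theorem IsPointCap.sum_card_tangents_sup_add_le (hK : IsPointCap K) (hW : finrank F W = 4)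
    (hKW : ∀ R ∈ K, R ≤ W) (hcomp : IsCompleteIn K W) (hP : P ∈ K) (hl : l ∈ tangents K P W) :
    ∑ R ∈ K.erase P, (tangents K R (l ⊔ R)).card + q ≤ q * (tangents K P W).card := by
  have hPl := (mem_covers.mp (mem_tangents.mp hl).1).1
  have card_points : ((covers ⊥ l).erase P).card = q := by
    rw [Finset.card_erase_of_mem (mem_covers_bot.mpr ⟨hPl, hK.finrank_eq_one P hP⟩),
      card_covers_two bot_le (by simp [hK.finrank_tangent hP hl]), Nat.add_sub_cancel]
  have double_count := Finset.sum_card_bipartiteAbove_eq_sum_card_bipartiteBelow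
    (s := (covers ⊥ l).erase P) (t := K.erase P) fun Q R => R ∈ tangentPoints K Q
  calc ∑ R ∈ K.erase P, (tangents K R (l ⊔ R)).card + q
      ≤ ∑ Q ∈ (covers ⊥ l).erase P, ((K.erase P).filter (· ∈ tangentPoints K Q)).card + q := by
        refine Nat.add_le_add_right ((Finset.sum_le_sum fun R hR => ?_).trans double_count.ge) _
        exact hK.card_tangents_sup_le hP hl (Finset.mem_of_mem_erase hR) (Finset.ne_of_mem_erase hR)
    _ = ∑ Q ∈ (covers ⊥ l).erase P, (((K.erase P).filter (· ∈ tangentPoints K Q)).card + 1) := by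
        rw [Finset.sum_add_distrib, Finset.sum_const, card_points, smul_eq_mul, mul_one]
    _ ≤ ∑ _ ∈ (covers ⊥ l).erase P, (tangents K P W).card := Finset.sum_le_sum fun _ hQ =>
        hK.card_filter_tangentPoints_add_one_le hW hKW hcomp hP hl hQ
    _ = q * (tangents K P W).card := by rw [Finset.sum_const, card_points, smul_eq_mul]

theorem IsPointCap.le_card_tangents_add_sum_sq (hK : IsPointCap K) (hW : finrank F W = 4)
    (hKW : ∀ R ∈ K, R ≤ W) (hcomp : IsCompleteIn K W) (hP : P ∈ K) (hl : l ∈ tangents K P W) :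
    q ^ 2 + q + 1
      ≤ (tangents K P W).card + ∑ X ∈ covers l W, ((tangents K P X).card - 1) ^ 2 := by
  obtain ⟨⟨-, hlW, -⟩, htan⟩ := (mem_tangents.mp hl).imp_left mem_covers.mp
  have hl2 := hK.finrank_tangent hP hl
  have card_planes : (covers l W).card = q + 1 := card_covers_two hlW (by rw [hW, hl2])
  have hdeg := hK.card_tangents_solid hW hP (hKW P hP)
  have hsum := sum_covers_card_pointsIn_add hK.finrank_eq_one hlW
  rw [htan, Finset.card_singleton, card_planes, mul_one] at hsum
  have hsup := hK.sum_card_tangents_sup_add_le hW hKW hcomp hP hl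
  rw [hK.sum_card_tangents_sup_eq hKW hP hl] at hsup
  have sum_card := Finset.sum_congr rfl fun X hX => (hK.tangents_plane_identity hP hl hX).1
  have sum_identity := Finset.sum_congr rfl fun X hX => (hK.tangents_plane_identity hP hl hX).2
  simp only [Finset.sum_add_distrib, Finset.sum_const, card_planes, smul_eq_mul, ← Finset.mul_sum]
    at sum_card sum_identity
  nlinarith

end TangentLines

section TangentPlanes

variable {F V : Type*} [Field F] [AddCommGroup V] [Module F V] [Finite V]
  {K : Finset (Submodule F V)} {P l m W X Y : Submodule F V}

/-- The planes contained in `W`. -/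
noncomputable def planesIn (W : Submodule F V) : Finset (Submodule F V) :=
  (Set.toFinite {X | X ≤ W ∧ finrank F X = 3}).toFinset

theorem mem_planesIn : X ∈ planesIn W ↔ X ≤ W ∧ finrank F X = 3 := by
  simp [planesIn]

open Classical in
theorem filter_planesIn_le (hl : finrank F l = 2) : (planesIn W).filter (l ≤ ·) = covers l W := by
  ext X
  rw [Finset.mem_filter, mem_planesIn, mem_covers, hl]
  tauto

theorem IsPointCap.isLinearSpace_tangents (hK : IsPointCap K) (hP : P ∈ K) :
    IsLinearSpace (tangents K P W) (planesIn W) (· ≤ ·) := by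
  intro l hl m hm hne
  have hlW := (mem_tangents.mp hl).1
  have hmW := (mem_tangents.mp hm).1
  have hsup := finrank_sup_of_mem_covers hlW hmW hne
  rw [hK.finrank_eq_one P hP] at hsup
  refine ⟨l ⊔ m, ⟨mem_planesIn.mpr ⟨?_, hsup⟩, le_sup_left, le_sup_right⟩, ?_⟩
  · exact sup_le (mem_covers.mp hlW).2.1 (mem_covers.mp hmW).2.1
  · rintro X ⟨hX, hlX, hmX⟩
    refine (Submodule.eq_of_le_of_finrank_eq (sup_le hlX hmX) ?_).symm
    rw [hsup, (mem_planesIn.mp hX).2]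

theorem IsPointCap.eq_inf_of_mem_tangents (hK : IsPointCap K) (hW : finrank F W = 4) (hP : P ∈ K)
    (hX : X ∈ planesIn W) (htan : ∀ l ∈ tangents K P W, l ≤ X) (hY : Y ∈ planesIn W) (hne : Y ≠ X)
    (hm : m ∈ tangents K P Y) : m = Y ⊓ X := by
  obtain ⟨hXW, hX3⟩ := mem_planesIn.mp hX
  obtain ⟨hYW, hY3⟩ := mem_planesIn.mp hY
  refine Submodule.eq_of_le_of_finrank_eq
    (le_inf (mem_covers.mp (mem_tangents.mp hm).1).2.1 (htan m (tangents_mono hYW hm))) ?_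
  have := finrank_inf_add_one_of_ne (by rw [hW, hY3]) (by rw [hW, hX3]) hYW hXW hne
  have := hK.finrank_tangent hP hm
  omega

variable [Fintype F]

local notation "q" => Fintype.card F

variable [CharP F 2]

theorem IsPointCap.exists_plane_tangents_le (hK : IsPointCap K) (hW : finrank F W = 4)
    (hKW : ∀ R ∈ K, R ≤ W) (hcomp : IsCompleteIn K W) (hcard : q ^ 2 + 3 ≤ K.card + q)
    (hP : P ∈ K) (hne : (tangents K P W).Nonempty) :
    ∃ X ∈ planesIn W, ∀ l ∈ tangents K P W, l ≤ X := by
  have hdeg := hK.card_tangents_solid hW hP (hKW P hP)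
  rw [pointsIn_eq_self hKW] at hdeg
  refine (hK.isLinearSpace_tangents hP).exists_block
    (by omega : _ ≤ 2 * q) (fun l hl => ?_) hne
  rw [filter_planesIn_le (hK.finrank_tangent hP hl)]
  refine (hK.le_card_tangents_add_sum_sq hW hKW hcomp hP hl).trans_eq ?_
  refine congrArg _ (Finset.sum_congr rfl fun X hX => ?_)
  rw [tangents_eq_filter (mem_covers.mp hX).2.1]

theorem IsPointCap.lt_card_tangents (hK : IsPointCap K) (hW : finrank F W = 4)
    (hKW : ∀ R ∈ K, R ≤ W) (hcomp : IsCompleteIn K W) (hP : P ∈ K) (hX : X ∈ planesIn W)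
    (htan : ∀ l ∈ tangents K P W, l ≤ X) (hl : l ∈ tangents K P W) :
    q < (tangents K P X).card := by
  classical
  obtain ⟨hXW, -⟩ := mem_planesIn.mp hX
  have hl2 := hK.finrank_tangent hP hl
  have hXl : X ∈ covers l W :=
    filter_planesIn_le (W := W) hl2 ▸ Finset.mem_filter.mpr ⟨hX, htan l hl⟩
  have other_planes : ∀ Y ∈ (covers l W).erase X, ((tangents K P Y).card - 1) ^ 2 = 0 := by
    intro Y hY
    obtain ⟨hne, hY⟩ := Finset.mem_erase.mp hY
    rw [← filter_planesIn_le hl2, Finset.mem_filter] at hY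
    have hle : (tangents K P Y).card ≤ 1 := Finset.card_le_one.mpr fun m hm m' hm' =>
      (hK.eq_inf_of_mem_tangents hW hP hX htan hY.1 hne hm).trans
        (hK.eq_inf_of_mem_tangents hW hP hX htan hY.1 hne hm').symm
    rw [Nat.sub_eq_zero_of_le hle, zero_pow two_ne_zero]
  have htanX : tangents K P X = tangents K P W := by
    rw [tangents_eq_filter hXW, Finset.filter_true_of_mem htan]
  have hsq := hK.le_card_tangents_add_sum_sq hW hKW hcomp hP hl
  rw [← Finset.add_sum_erase _ _ hXl, Finset.sum_eq_zero other_planes, ← htanX] at hsq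
  obtain ⟨t, ht⟩ := Nat.exists_eq_succ_of_ne_zero
    (Finset.card_ne_zero_of_mem (htanX ▸ hl : l ∈ tangents K P X))
  rw [ht, Nat.succ_sub_one] at hsq
  rw [ht]
  by_contra! hle
  nlinarith

theorem IsPointCap.exists_tangent_plane (hK : IsPointCap K) (hW : finrank F W = 4)
    (hKW : ∀ R ∈ K, R ≤ W) (hcomp : IsCompleteIn K W) (hcard : q ^ 2 + 3 ≤ K.card + q)
    (hP : P ∈ K) (hne : (tangents K P W).Nonempty) :
    ∃ X ∈ planesIn W, tangents K P W = covers P X ∧ (covers P X).card = q + 1 := by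
  classical
  obtain ⟨X, hX, htan⟩ := hK.exists_plane_tangents_le hW hKW hcomp hcard hP hne
  obtain ⟨hXW, hX3⟩ := mem_planesIn.mp hX
  obtain ⟨l, hl⟩ := hne
  have hPX : P ≤ X := (mem_covers.mp (mem_tangents.mp hl).1).1.trans (htan l hl)
  have hcovers : (covers P X).card = q + 1 :=
    card_covers_two hPX (by rw [hX3, hK.finrank_eq_one P hP])
  refine ⟨X, hX, ?_, hcovers⟩
  rw [← Finset.filter_true_of_mem htan, ← tangents_eq_filter hXW]
  exact Finset.eq_of_subset_of_card_le (Finset.filter_subset _ _)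
    (hcovers ▸ hK.lt_card_tangents hW hKW hcomp hP hX htan hl)

end TangentPlanes

section NoTangents

variable {F V : Type*} [Field F] [AddCommGroup V] [Module F V] [Finite V]
  {K : Finset (Submodule F V)} {P Q l W X : Submodule F V}

theorem IsPointCap.card_pointsIn_of_tangents_eq_empty (hK : IsPointCap K)
    (htan : ∀ P ∈ K, tangents K P W = ∅) (hlW : l ≤ W) (hl : finrank F l = 2)
    (hne : (pointsIn K l).Nonempty) : (pointsIn K l).card = 2 := by
  obtain ⟨P, hP⟩ := hne
  obtain ⟨hP, hPl⟩ := mem_pointsIn.mp hP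
  have hlP : l ∈ covers P W := mem_covers.mpr ⟨hPl, hlW, by rw [hl, hK.finrank_eq_one P hP]⟩
  exact hK.card_pointsIn_of_notMem_tangents hP hlP fun h =>
    Finset.notMem_empty l (htan P hP ▸ mem_tangents.mpr ⟨hlP, h⟩)

variable [Fintype F]

local notation "q" => Fintype.card F

theorem IsPointCap.exists_external_line (hK : IsPointCap K) (hW : finrank F W = 4)
    (hKW : ∀ R ∈ K, R ≤ W) (hcard : K.card = q ^ 2 + q + 2) (htan : ∀ P ∈ K, tangents K P W = ∅) :
    ∃ e ≤ W, finrank F e = 2 ∧ pointsIn K e = ∅ := by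
  have hq : 1 < q := Fintype.one_lt_card
  obtain ⟨Q, hQ, hQK⟩ : ∃ Q ∈ covers ⊥ W, Q ∉ K := by
    apply Finset.exists_mem_notMem_of_card_lt_card
    rw [hcard, card_covers_four bot_le (by simp [hW])]
    nlinarith
  obtain ⟨hQW, hQ1⟩ := mem_covers_bot.mp hQ
  have hsum := sum_covers_card_pointsIn_add hK.finrank_eq_one hQW
  rw [hK.pointsIn_eq_empty_of_notMem hQ1 hQK, pointsIn_eq_self hKW, hcard] at hsum
  by_contra! hmeet
  have two_per_line : ∀ l ∈ covers Q W, (pointsIn K l).card = 2 := by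
    intro l hl
    obtain ⟨-, hlW, hl2⟩ := mem_covers.mp hl
    rw [hQ1] at hl2
    exact hK.card_pointsIn_of_tangents_eq_empty htan hlW hl2 (hmeet l hlW hl2)
  rw [Finset.sum_congr rfl two_per_line, Finset.sum_const,
    card_covers_three hQW (by rw [hW, hQ1]), Finset.card_empty, smul_eq_mul] at hsum
  nlinarith

theorem IsPointCap.dvd_card_of_tangents_eq_empty (hK : IsPointCap K) (hKW : ∀ R ∈ K, R ≤ W)
    (htan : ∀ P ∈ K, tangents K P W = ∅) (hlW : l ≤ W) (hl : finrank F l = 2)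
    (hKl : pointsIn K l = ∅) : q + 2 ∣ K.card := by
  have hsum := sum_covers_card_pointsIn_add hK.finrank_eq_one hlW
  rw [hKl, Finset.card_empty, mul_zero, add_zero, add_zero, pointsIn_eq_self hKW] at hsum
  rw [← hsum]
  refine Finset.dvd_sum fun X hX => ?_
  obtain ⟨-, hXW, hX3⟩ := mem_covers.mp hX
  rcases (pointsIn K X).eq_empty_or_nonempty with h | ⟨P, hP⟩
  · simp [h]
  · obtain ⟨hP, hPX⟩ := mem_pointsIn.mp hP
    have htanX := Finset.subset_empty.mp (htan P hP ▸ tangents_mono (K := K) (P := P) hXW)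
    rw [← hK.card_tangents_plane (by rw [hX3, hl]) hP hPX, htanX, Finset.card_empty, zero_add]

theorem not_add_two_dvd {n : ℕ} (hn : 2 < n) : ¬n + 2 ∣ n ^ 2 + n + 2 := by
  obtain ⟨p, rfl⟩ := Nat.exists_eq_add_of_lt hn
  intro h
  rw [show (2 + p + 1) ^ 2 + (2 + p + 1) + 2 = (2 + p + 1 + 2) * (p + 2) + 4 by ring,
    Nat.dvd_add_right (dvd_mul_right _ _)] at h
  have := Nat.le_of_dvd four_pos h
  omega

theorem IsPointCap.exists_tangents_nonempty (hq : 2 < q) (hK : IsPointCap K)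
    (hW : finrank F W = 4) (hKW : ∀ R ∈ K, R ≤ W) (hne : K.Nonempty) :
    ∃ P ∈ K, (tangents K P W).Nonempty := by
  by_contra! htan
  obtain ⟨P, hP⟩ := hne
  have hcard := hK.card_tangents_solid hW hP (hKW P hP)
  rw [htan P hP, Finset.card_empty, zero_add, pointsIn_eq_self hKW] at hcard
  obtain ⟨e, heW, he, hKe⟩ := hK.exists_external_line hW hKW hcard htan
  exact not_add_two_dvd hq (hcard ▸ hK.dvd_card_of_tangents_eq_empty hKW htan heW he hKe)

end NoTangents

section Ovoids

variable {F V : Type*} [Field F] [Fintype F] [CharP F 2] [AddCommGroup V] [Module F V] [Finite V]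
  {K : Finset (Submodule F V)} {P W X : Submodule F V}

local notation "q" => Fintype.card F

theorem IsPointCap.card_eq_of_isCompleteIn_solid (hq : 2 < q) (hK : IsPointCap K)
    (hW : finrank F W = 4) (hKW : ∀ R ∈ K, R ≤ W) (hcomp : IsCompleteIn K W)
    (hcard : q ^ 2 + 3 ≤ K.card + q) : K.card = q ^ 2 + 1 := by
  obtain ⟨P, hP, hne⟩ :=
    hK.exists_tangents_nonempty hq hW hKW (Finset.card_pos.mp (by nlinarith))
  obtain ⟨X, -, htan, hX⟩ := hK.exists_tangent_plane hW hKW hcomp hcard hP hne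
  have hdeg := hK.card_tangents_solid hW hP (hKW P hP)
  rw [pointsIn_eq_self hKW, htan, hX] at hdeg
  omega

theorem IsPointCap.card_pointsIn_plane_of_isCompleteIn_solid (hq : 2 < q) (hK : IsPointCap K)
    (hW : finrank F W = 4) (hKW : ∀ R ∈ K, R ≤ W) (hcomp : IsCompleteIn K W)
    (hcard : q ^ 2 + 3 ≤ K.card + q) (hXW : X ≤ W) (hX : finrank F X = 3)
    (hKX : 2 ≤ (pointsIn K X).card) : (pointsIn K X).card = q + 1 := by
  classical
  obtain ⟨P, hP⟩ := Finset.card_pos.mp (Nat.zero_lt_two.trans_le hKX)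
  obtain ⟨hP, hPX⟩ := mem_pointsIn.mp hP
  have hP1 := hK.finrank_eq_one P hP
  have hdeg := hK.card_tangents_solid hW hP (hKW P hP)
  rw [pointsIn_eq_self hKW, hK.card_eq_of_isCompleteIn_solid hq hW hKW hcomp hcard] at hdeg
  obtain ⟨Y, hY, htan, hYcard⟩ := hK.exists_tangent_plane hW hKW hcomp hcard hP
    (Finset.card_pos.mp (by omega))
  obtain ⟨hYW, hY3⟩ := mem_planesIn.mp hY
  have hdegX := hK.card_tangents_plane hX hP hPX
  have htan_le : ∀ l ∈ tangents K P W, l ≤ Y := fun l hl => (mem_covers.mp (htan ▸ hl)).2.1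
  have hne : X ≠ Y := by
    rintro rfl
    rw [tangents_eq_filter hYW, Finset.filter_true_of_mem htan_le, htan] at hdegX
    omega
  have hPY : P ≤ Y := by
    obtain ⟨l, hl⟩ := Finset.card_pos.mp (by omega : 0 < (covers P Y).card)
    exact (mem_covers.mp hl).1.trans (mem_covers.mp hl).2.1
  have hinf := finrank_inf_add_one_of_ne (by rw [hW, hX]) (by rw [hW, hY3]) hXW hYW hne
  have hinf_mem : X ⊓ Y ∈ tangents K P X := by
    rw [tangents_eq_filter hXW, htan]
    refine Finset.mem_filter.mpr ⟨mem_covers.mpr ⟨le_inf hPX hPY, inf_le_right, ?_⟩, inf_le_left⟩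
    omega
  have hone : tangents K P X = {X ⊓ Y} := Finset.eq_singleton_iff_unique_mem.mpr
    ⟨hinf_mem, fun m hm => hK.eq_inf_of_mem_tangents hW hP hY htan_le
      (mem_planesIn.mpr ⟨hXW, hX⟩) hne hm⟩
  rw [hone, Finset.card_singleton] at hdegX
  omega

/-- The set `O` behaves like an ovoid of the solid `S`: it is a complete cap of `S` with `q² + 1`
points, and every plane of `S` that meets it in more than one point meets it in an oval. -/
structure IsOvoidIn (O : Finset (Submodule F V)) (S : Submodule F V) : Prop where
  isPointCap : IsPointCap O
  le : ∀ P ∈ O, P ≤ S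
  isCompleteIn : IsCompleteIn O S
  card_eq : O.card = q ^ 2 + 1
  card_pointsIn_plane : ∀ X ≤ S, finrank F X = 3 → 2 ≤ (pointsIn O X).card →
    (pointsIn O X).card = q + 1

theorem IsPointCap.exists_isOvoidIn (hq : 2 < q) (hK : IsPointCap K) (hW : finrank F W = 4)
    (hcard : q ^ 2 + 3 ≤ (pointsIn K W).card + q) :
    ∃ O, IsOvoidIn O W ∧ pointsIn K W ⊆ O := by
  obtain ⟨O, hO, hKO, hOW, hcomp⟩ :=
    (hK.pointsIn W).exists_isCompleteIn (W := W) fun P hP => (mem_pointsIn.mp hP).2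
  have hOcard : q ^ 2 + 3 ≤ O.card + q := hcard.trans (by gcongr)
  exact ⟨O, ⟨hO, hOW, hcomp, hO.card_eq_of_isCompleteIn_solid hq hW hOW hcomp hOcard,
    fun X hXW hX => hO.card_pointsIn_plane_of_isCompleteIn_solid hq hW hOW hcomp hOcard hXW hX⟩,
    hKO⟩

theorem IsPointCap.card_pointsIn_solid_le (hq : 2 < q) (hK : IsPointCap K) (hW : finrank F W = 4) :
    (pointsIn K W).card ≤ q ^ 2 + 1 := by
  by_contra! hlt
  obtain ⟨O, hO, hKO⟩ := hK.exists_isOvoidIn hq hW (by omega)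
  have := Finset.card_le_card hKO
  rw [hO.card_eq] at this
  omega

end Ovoids

section PlaneExtensions

variable {F V : Type*} [Field F] [AddCommGroup V] [Module F V] [Finite V]
  {L : Finset (Submodule F V)} {P W X Y : Submodule F V}

theorem IsPointCap.erase_subset_tangentPoints_insert (hL : IsPointCap L) (hX : finrank F X = 1)
    (hY : finrank F Y = 1) (hYL : ¬OnSecant L Y) (hXY : X ≠ Y) (hP : P ∈ L) (hle : Y ≤ P ⊔ X) :
    L.erase P ⊆ tangentPoints (Insert.insert X L) Y := by
  intro R hR
  obtain ⟨hRP, hR⟩ := Finset.mem_erase.mp hR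
  have htan := (mem_tangentPoints.mp ((tangentPoints_eq_self hL hY hYL).symm ▸ hR)).2
  refine mem_tangentPoints.mpr ⟨Finset.mem_insert_of_mem hR, fun S hS hSR hSle => ?_⟩
  rcases Finset.mem_insert.mp hS with rfl | hS
  · have hP1 := hL.finrank_eq_one P hP
    have hPS : S ⊔ Y = P ⊔ S :=
      line_eq_sup_of_points hX hY (finrank_sup_of_points_le hP1 hX) hXY le_sup_right hle
    have hRS : S ⊔ Y = R ⊔ Y := sup_point_exchange (hL.finrank_eq_one R hR) hY hX hSle hXY
    exact htan P hP hRP.symm (hRS ▸ hPS ▸ le_sup_left)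
  · exact htan S hS hSR hSle

theorem sup_mem_tangents (hX : finrank F X = 1) (hPX : ¬X ≤ P) (hPW : P ≤ W)
    (hXW : X ≤ W) (hP : P ∈ tangentPoints L X) : P ⊔ X ∈ tangents L P W :=
  mem_tangents.mpr
    ⟨sup_point_mem_covers hPW hX hPX hXW, mem_tangentPoints_iff_pointsIn_eq.mp hP⟩

variable [Fintype F] [CharP F 2]

local notation "q" => Fintype.card F

-- Otherwise `Y` lies on the secant `PX` of `insert X L`, but on too many tangents of this arc.
theorem IsPointCap.not_le_sup_of_not_onSecant (hL : IsPointCap L) (hW : finrank F W = 3)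
    (hLW : ∀ R ∈ L, R ≤ W) (hcard : q + 2 < 2 * L.card)
    (hX : finrank F X = 1) (hXW : X ≤ W) (hXL : X ∉ L) (hXsec : ¬OnSecant L X)
    (hY : finrank F Y = 1) (hYL : Y ∉ L) (hYsec : ¬OnSecant L Y) (hXY : X ≠ Y) (hP : P ∈ L) :
    ¬Y ≤ P ⊔ X := by
  intro hle
  have hsec : OnSecant (Insert.insert X L) Y := ⟨P, Finset.mem_insert_of_mem hP, X,
    Finset.mem_insert_self X L, fun h => hXL (h ▸ hP), hle⟩
  have htan := (hL.insert hX hXsec).card_tangentPoints_add_card_le hW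
    (Finset.forall_mem_insert _ _ _ |>.mpr ⟨hXW, hLW⟩) hY (by simp [hXY.symm, hYL]) hsec
  have hsub := Finset.card_le_card
    (hL.erase_subset_tangentPoints_insert hX hY hYsec hXY hP hle)
  rw [Finset.card_erase_of_mem hP] at hsub
  rw [Finset.card_insert_of_notMem hXL] at htan
  omega

theorem IsPointCap.card_extensions_add_card_le (hL : IsPointCap L) (hW : finrank F W = 3)
    (hLW : ∀ R ∈ L, R ≤ W) (hcard : q + 2 < 2 * L.card) {E : Finset (Submodule F V)}
    (hE : ∀ X ∈ E, finrank F X = 1 ∧ X ≤ W ∧ X ∉ L ∧ ¬OnSecant L X) :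
    E.card + L.card ≤ q + 2 := by
  obtain ⟨P, hP⟩ := Finset.card_pos.mp (by omega : 0 < L.card)
  have htan := hL.card_tangents_plane hW hP (hLW P hP)
  rw [pointsIn_eq_self hLW] at htan
  have not_le {X} (hX : X ∈ E) : ¬X ≤ P := fun h =>
    (hE X hX).2.2.1 (eq_of_point_le (hE X hX).1 (hL.finrank_eq_one P hP) h ▸ hP)
  have hle : E.card ≤ (tangents L P W).card := by
    refine Finset.card_le_card_of_injOn (P ⊔ ·) (fun X hX => ?_) fun X hX Y hY h => ?_
    · obtain ⟨hX1, hXW, -, hXsec⟩ := hE X hX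
      exact sup_mem_tangents hX1 (not_le hX) (hLW P hP) hXW
        ((tangentPoints_eq_self hL hX1 hXsec).symm ▸ hP)
    · obtain ⟨hX1, hXW, hXL, hXsec⟩ := hE X hX
      obtain ⟨hY1, -, hYL, hYsec⟩ := hE Y hY
      by_contra hXY
      exact hL.not_le_sup_of_not_onSecant hW hLW hcard hX1 hXW hXL hXsec hY1 hYL hYsec hXY hP
        (h.trans_ge le_sup_right)
  omega

end PlaneExtensions

section RichSolids

variable {F V : Type*} [Field F] [Fintype F] [AddCommGroup V] [Module F V] [Finite V]
  {K O : Finset (Submodule F V)} {A N S X : Submodule F V}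

local notation "q" => Fintype.card F

/-- The solids through `r` that contain more than `q² - q + 2` points of `K`: by
`IsPointCap.exists_isOvoidIn`, the section of a cap by such a solid is part of an ovoid. -/
noncomputable def richSolids (K : Finset (Submodule F V)) (r : Submodule F V) :
    Finset (Submodule F V) :=
  (Set.toFinite
    {S | r ≤ S ∧ finrank F S = 4 ∧ q ^ 2 + 3 ≤ (pointsIn K S).card + q}).toFinset

theorem mem_richSolids {r : Submodule F V} : S ∈ richSolids K r ↔
    r ≤ S ∧ finrank F S = 4 ∧ q ^ 2 + 3 ≤ (pointsIn K S).card + q := by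
  simp [richSolids]

/-- A complete cap of PG(4, q) with at least `q³ - q² + 4q` points. The proof of the main theorem
consists in showing that there is none. -/
structure IsLargeCap (K : Finset (Submodule F V)) : Prop where
  isPointCap : IsPointCap K
  isCompleteIn : IsCompleteIn K ⊤
  finrank_eq : finrank F V = 5
  le_card : q ^ 3 + 4 * q ≤ K.card + q ^ 2

theorem IsOvoidIn.exists_plane_avoiding (hO : IsOvoidIn O S) (hS : finrank F S = 4)
    {M : Finset (Submodule F V)} (hA : A ∈ O) (hN : N ∈ O) (hAN : A ≠ N)
    (hM : ∀ R ∈ M, R ∈ O ∧ R ≠ A ∧ R ≠ N) (hcard : M.card ≤ q) :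
    ∃ X ≤ S, finrank F X = 3 ∧ N ≤ X ∧ (pointsIn O X).card = q + 1 ∧ ∀ R ∈ M, ¬R ≤ X := by
  have hA1 := hO.isPointCap.finrank_eq_one A hA
  have hN1 := hO.isPointCap.finrank_eq_one N hN
  have hline := finrank_sup_of_points hA1 hN1 hAN
  have hlineS : A ⊔ N ≤ S := sup_le (hO.le A hA) (hO.le N hN)
  have hcovers := card_covers_two hlineS (by rw [hS, hline])
  obtain ⟨X, hX, hMX⟩ := exists_mem_covers_forall_not_le (r := A ⊔ N) (W := S) (M := M)
    (fun R hR => ⟨hO.isPointCap.finrank_eq_one R (hM R hR).1, hO.isPointCap.not_le_sup A hA N hN R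
      (hM R hR).1 hAN (hM R hR).2.1.symm (hM R hR).2.2.symm⟩) (by omega)
  obtain ⟨hlX, hXS, hX3⟩ := mem_covers.mp hX
  rw [hline] at hX3
  refine ⟨X, hXS, hX3, le_sup_right.trans hlX, hO.card_pointsIn_plane X hXS hX3 ?_, hMX⟩
  rw [← hO.isPointCap.card_pointsIn_secant hA hN hAN]
  exact Finset.card_le_card (pointsIn_mono hlX)

variable [CharP F 2]

theorem IsLargeCap.card_tangentPoints_add_card_le (hK : IsLargeCap K) (hN : finrank F N = 1)
    (hNK : N ∉ K) : (tangentPoints K N).card + K.card ≤ q ^ 3 + q ^ 2 + q + 2 := by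
  obtain ⟨A, hA, B, hB, hAB, hle⟩ := hK.isCompleteIn N hN le_top hNK
  have hline : finrank F ↥(A ⊔ B) = 2 := finrank_sup_of_points
    (hK.isPointCap.finrank_eq_one A hA) (hK.isPointCap.finrank_eq_one B hB) hAB
  have := hK.isPointCap.card_tangentPoints_le_of_secant hA hB hAB hN hNK hle le_top
  rw [pointsIn_top, pointsIn_top, card_covers_three le_top (by rw [finrank_top, hline,
    hK.finrank_eq])] at this
  linarith

theorem IsPointCap.exists_subset_tangentPoints (hq : 2 < q) (hK : IsPointCap K)
    (hX : finrank F X = 3) (hKX : (pointsIn K X).card = q) (hS : S ∈ richSolids K X) :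
    ∃ N ≤ X, finrank F N = 1 ∧ N ∉ K ∧ pointsIn K S ⊆ tangentPoints K N := by
  obtain ⟨hXS, hS4, hcard⟩ := mem_richSolids.mp hS
  obtain ⟨O, hO, hKO⟩ := hK.exists_isOvoidIn hq hS4 hcard
  have hsub : pointsIn K X ⊆ pointsIn O X := fun P hP =>
    mem_pointsIn.mpr ⟨hKO (pointsIn_mono hXS hP), (mem_pointsIn.mp hP).2⟩
  have hOX := hO.card_pointsIn_plane X hXS hX
    ((by omega : 2 ≤ (pointsIn K X).card).trans (Finset.card_le_card hsub))
  obtain ⟨N, hN, hNK⟩ := Finset.exists_mem_notMem_of_card_lt_card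
    (by omega : (pointsIn K X).card < (pointsIn O X).card)
  obtain ⟨hNO, hNX⟩ := mem_pointsIn.mp hN
  have hNK' : N ∉ K := fun h => hNK (mem_pointsIn.mpr ⟨h, hNX⟩)
  exact ⟨N, hNX, hO.isPointCap.finrank_eq_one N hNO, hNK',
    hO.isPointCap.subset_tangentPoints hKO hNO (hNX.trans hXS) hNK'⟩

theorem IsLargeCap.eq_of_subset_tangentPoints (hK : IsLargeCap K) {S' : Submodule F V}
    (hX : finrank F X = 3) (hKX : (pointsIn K X).card = q) (hN : finrank F N = 1) (hNK : N ∉ K)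
    (hS : S ∈ richSolids K X) (hSN : pointsIn K S ⊆ tangentPoints K N)
    (hS' : S' ∈ richSolids K X) (hSN' : pointsIn K S' ⊆ tangentPoints K N) : S = S' := by
  by_contra hne
  obtain ⟨hXS, hS4, hcard⟩ := mem_richSolids.mp hS
  obtain ⟨hXS', hS4', hcard'⟩ := mem_richSolids.mp hS'
  have hinf : S ⊓ S' = X := inf_eq_of_mem_covers (W := ⊤)
    (mem_covers.mpr ⟨hXS, le_top, by rw [hS4, hX]⟩)
    (mem_covers.mpr ⟨hXS', le_top, by rw [hS4', hX]⟩) hne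
  have hunion := Finset.card_union_add_card_inter (pointsIn K S) (pointsIn K S')
  rw [pointsIn_inter_pointsIn, hinf, hKX] at hunion
  have := Finset.card_le_card (Finset.union_subset hSN hSN')
  have := hK.card_tangentPoints_add_card_le hN hNK
  have := hK.le_card
  omega

theorem IsLargeCap.card_richSolids_le_two (hq : 2 < q) (hK : IsLargeCap K)
    (hX : finrank F X = 3) (hKX : (pointsIn K X).card = q) : (richSolids K X).card ≤ 2 := by
  choose! f hfX hf1 hfK hf using fun S (hS : S ∈ richSolids K X) =>
    hK.isPointCap.exists_subset_tangentPoints hq hX hKX hS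
  have hinj : Set.InjOn f (richSolids K X) := fun S hS S' hS' h =>
    hK.eq_of_subset_tangentPoints hX hKX (hf1 S hS) (hfK S hS) hS (hf S hS) hS' (h ▸ hf S' hS')
  have hext := (hK.isPointCap.pointsIn X).card_extensions_add_card_le hX
    (fun P hP => (mem_pointsIn.mp hP).2) (by omega) (E := (richSolids K X).image f) fun N hN => by
      obtain ⟨S, hS, rfl⟩ := Finset.mem_image.mp hN
      exact ⟨hf1 S hS, hfX S hS, fun h => hfK S hS (pointsIn_subset K X h),
        hK.isPointCap.not_onSecant_of_subset_tangentPoints (hf1 S hS) (hfK S hS)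
          ((pointsIn_mono (mem_richSolids.mp hS).1).trans (hf S hS))⟩
  rw [Finset.card_image_of_injOn hinj, hKX] at hext
  omega

theorem IsPointCap.card_add_mul_card_plane_le (hq : 2 < q) (hV : finrank F V = 5)
    (hK : IsPointCap K) (hX : finrank F X = 3) :
    K.card + q * (pointsIn K X).card + (richSolids K X).card
      ≤ q ^ 3 + q + 2 + q * (richSolids K X).card := by
  have hcovers : (covers X ⊤).card = q + 1 := card_covers_two le_top (by rw [finrank_top, hV, hX])
  have hrich : richSolids K X
      = (covers X ⊤).filter fun S => q ^ 2 + 3 ≤ (pointsIn K S).card + q := by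
    ext S
    simp only [mem_richSolids, Finset.mem_filter, mem_covers, hX, le_top, true_and, and_assoc]
  have hsum := sum_covers_card_pointsIn_add hK.finrank_eq_one (le_top (a := X))
  rw [pointsIn_top, hcovers] at hsum
  have per_solid : ∀ S ∈ covers X ⊤, (pointsIn K S).card + q
      + (if q ^ 2 + 3 ≤ (pointsIn K S).card + q then 1 else 0)
      ≤ q ^ 2 + 2 + q * if q ^ 2 + 3 ≤ (pointsIn K S).card + q then 1 else 0 := by
    intro S hS
    have := hK.card_pointsIn_solid_le hq ((mem_covers.mp hS).2.2.trans (by rw [hX]))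
    split_ifs <;> omega
  have hle := Finset.sum_le_sum per_solid
  simp only [Finset.sum_add_distrib, Finset.sum_const, ← Finset.mul_sum, ← Finset.card_filter,
    ← hrich, hcovers, smul_eq_mul] at hle
  nlinarith

theorem IsLargeCap.card_pointsIn_plane_ne (hq : 2 < q) (hK : IsLargeCap K)
    (hX : finrank F X = 3) : (pointsIn K X).card ≠ q := by
  intro hKX
  have hle := hK.isPointCap.card_add_mul_card_plane_le hq hK.finrank_eq hX
  have htwo := hK.card_richSolids_le_two hq hX hKX
  have hcard := hK.le_card
  rw [hKX] at hle
  nlinarith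

-- A point of the ovoid outside `K` would produce a plane meeting `K` in exactly `q` points.
theorem IsLargeCap.pointsIn_eq_of_subset_ovoid (hq : 2 < q) (hK : IsLargeCap K)
    (hS : finrank F S = 4) (hcard : q ^ 2 + 3 ≤ (pointsIn K S).card + q) (hO : IsOvoidIn O S)
    (hKO : pointsIn K S ⊆ O) : pointsIn K S = O := by
  refine Finset.Subset.antisymm hKO fun N hN => by_contra fun hNK => ?_
  obtain ⟨A, hA⟩ := Finset.card_pos.mp (by nlinarith : 0 < (pointsIn K S).card)
  have hM : ((O \ pointsIn K S).erase N).card ≤ q := by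
    have hsdiff := Finset.card_sdiff_add_card_eq_card hKO
    have := Finset.card_erase_le (s := O \ pointsIn K S) (a := N)
    have := hO.card_eq
    omega
  obtain ⟨X, hXS, hX, hNX, hOX, hMX⟩ := hO.exists_plane_avoiding hS (hKO hA) hN
    (fun h => hNK (h ▸ hA)) (fun R hR => by
      obtain ⟨hRN, hR⟩ := Finset.mem_erase.mp hR
      obtain ⟨hRO, hRK⟩ := Finset.mem_sdiff.mp hR
      exact ⟨hRO, fun h => hRK (h ▸ hA), hRN⟩) hM
  have hKX : pointsIn K X = (pointsIn O X).erase N := by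
    rw [← pointsIn_pointsIn_of_le hXS]
    ext R
    rw [Finset.mem_erase, mem_pointsIn, mem_pointsIn (K := O)]
    refine ⟨fun ⟨hR, hRX⟩ => ⟨fun h => hNK (h ▸ hR), hKO hR, hRX⟩, fun ⟨hRN, hR, hRX⟩ => ⟨?_, hRX⟩⟩
    by_contra hRK
    exact hMX R (Finset.mem_erase.mpr ⟨hRN, Finset.mem_sdiff.mpr ⟨hR, hRK⟩⟩) hRX
  refine hK.card_pointsIn_plane_ne hq hX ?_
  rw [hKX, Finset.card_erase_of_mem (mem_pointsIn.mpr ⟨hN, hNX⟩), hOX, Nat.add_sub_cancel]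

theorem IsLargeCap.isOvoidIn (hq : 2 < q) (hK : IsLargeCap K) (hS : finrank F S = 4)
    (hcard : q ^ 2 + 3 ≤ (pointsIn K S).card + q) : IsOvoidIn (pointsIn K S) S := by
  obtain ⟨O, hO, hKO⟩ := hK.isPointCap.exists_isOvoidIn hq hS hcard
  exact hK.pointsIn_eq_of_subset_ovoid hq hS hcard hO hKO ▸ hO

end RichSolids

-- `k = |K|`, and for a secant `r` of `K` the planes `X` through `r` have `z = ∑ |K ∩ X|`, while `s`
-- is the number of rich solids through `r`.
theorem three_mul_add_six_le {n k z s : ℕ} (hn : 16 ≤ n) (hk : n ^ 3 + 4 * n ≤ k + n ^ 2)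
    (hz : z + 2 = k + (n ^ 2 + n + 1) * 2)
    (h : (n ^ 2 + n + 1) * k + n * z + s * (n + 1)
      ≤ (n ^ 2 + n + 1) * (n ^ 3 + n + 2) + n * (s * (n + 1))) : 3 * n + 6 ≤ s := by
  obtain ⟨m, rfl⟩ : ∃ m, n = m + 1 := ⟨n - 1, by omega⟩
  obtain rfl : z = k + 2 * (m + 1) ^ 2 + 2 * (m + 1) := by nlinarith
  have hcancel : (m + 2) * ((m + 2) * k + 2 * (m + 1) ^ 2)
      ≤ (m + 2) * (((m + 1) ^ 2 + (m + 1) + 1) * (m * (m + 1) + 2) + m * s) := by nlinarith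
  have hle := Nat.le_of_mul_le_mul_left hcancel (by omega)
  by_contra! hs
  have := Nat.mul_le_mul_left (m + 2) hk
  have := Nat.mul_le_mul_left m (by omega : s ≤ 3 * (m + 1) + 5)
  nlinarith

section PointsOffTheCap

variable {F V : Type*} [Field F] [AddCommGroup V] [Module F V] [Finite V]
  {K : Finset (Submodule F V)} {N X Y : Submodule F V}

theorem IsPointCap.exists_tangentPoint_of_odd (hK : IsPointCap K) (hN : finrank F N = 1)
    (hNK : N ∉ K) (hNX : N ≤ X) (hodd : Odd (pointsIn K X).card) :
    ∃ P ∈ tangentPoints K N, P ≤ X := by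
  by_contra! hnone
  have hsum := sum_covers_card_pointsIn_add hK.finrank_eq_one hNX
  rw [hK.pointsIn_eq_empty_of_notMem hN hNK, Finset.card_empty, mul_zero, add_zero,
    add_zero] at hsum
  refine Nat.not_even_iff_odd.mpr hodd (hsum ▸ Finset.even_sum _ fun l hl => ?_)
  obtain ⟨hNl, hlX, hl2⟩ := mem_covers.mp hl
  rcases (pointsIn K l).eq_empty_or_nonempty with h | ⟨P, hP⟩
  · simp [h]
  obtain ⟨hPK, hPl⟩ := mem_pointsIn.mp hP
  obtain ⟨R, hR, hPR, hRle⟩ : ∃ R ∈ K, P ≠ R ∧ R ≤ P ⊔ N := by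
    by_contra! h
    exact hnone P (mem_tangentPoints.mpr ⟨hPK, fun R hR hRP => h R hR hRP.symm⟩) (hPl.trans hlX)
  have hline : P ⊔ R = l := line_eq_sup_of_points (hK.finrank_eq_one P hPK)
    (hK.finrank_eq_one R hR) (by omega) hPR hPl (hRle.trans (sup_le hPl hNl))
  rw [← hline, hK.card_pointsIn_secant hPK hR hPR]
  exact even_two

theorem IsPointCap.pointsIn_tangentPoints_of_not_onSecant (hK : IsPointCap K)
    (hN : finrank F N = 1) (hNY : N ≤ Y) (hsec : ¬OnSecant (pointsIn K Y) N) :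
    pointsIn (tangentPoints K N) Y = pointsIn K Y := by
  rw [← tangentPoints_pointsIn hNY, tangentPoints_eq_self (hK.pointsIn Y) hN hsec]

end PointsOffTheCap

section RichSolidsThroughSecants

variable {F V : Type*} [Field F] [Fintype F] [AddCommGroup V] [Module F V] [Finite V]
  {K : Finset (Submodule F V)} {A B N S X : Submodule F V}

local notation "q" => Fintype.card F

theorem sum_card_richSolids {r : Submodule F V} (hr : finrank F r = 2) :
    ∑ X ∈ covers r ⊤, (richSolids K X).card = (richSolids K r).card * (q + 1) := by
  classical
  have above : ∀ X ∈ covers r ⊤, richSolids K X = (richSolids K r).filter (X ≤ ·) := by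
    intro X hX
    ext S
    have := (mem_covers.mp hX).1
    simp only [Finset.mem_filter, mem_richSolids]
    exact ⟨fun ⟨hXS, hS⟩ => ⟨⟨this.trans hXS, hS⟩, hXS⟩, fun ⟨⟨_, hS⟩, hXS⟩ => ⟨hXS, hS⟩⟩
  have below : ∀ S ∈ richSolids K r, ((covers r ⊤).filter (· ≤ S)).card = q + 1 := by
    intro S hS
    obtain ⟨hrS, hS, -⟩ := mem_richSolids.mp hS
    rw [← card_covers_two hrS (by rw [hS, hr])]
    congr 1
    ext X
    simp only [Finset.mem_filter, mem_covers, le_top, true_and]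
    tauto
  rw [Finset.sum_congr rfl fun X hX => by rw [above X hX], ← smul_eq_mul, ← Finset.sum_const,
    ← Finset.sum_congr rfl below]
  exact Finset.sum_card_bipartiteAbove_eq_sum_card_bipartiteBelow (· ≤ ·)

variable [CharP F 2]

theorem IsLargeCap.le_card_richSolids (hq : 16 ≤ q) (hK : IsLargeCap K) (hA : A ∈ K) (hB : B ∈ K)
    (hAB : A ≠ B) : 3 * q + 6 ≤ (richSolids K (A ⊔ B)).card := by
  have hline := finrank_sup_of_points (hK.isPointCap.finrank_eq_one A hA)
    (hK.isPointCap.finrank_eq_one B hB) hAB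
  have hcovers := card_covers_three (le_top (a := A ⊔ B))
    (by rw [finrank_top, hK.finrank_eq, hline])
  have hpoints := sum_covers_card_pointsIn_add hK.isPointCap.finrank_eq_one (le_top (a := A ⊔ B))
  rw [pointsIn_top, hK.isPointCap.card_pointsIn_secant hA hB hAB, hcovers] at hpoints
  have hplanes := Finset.sum_le_sum fun X (hX : X ∈ covers (A ⊔ B) ⊤) =>
    hK.isPointCap.card_add_mul_card_plane_le (by omega) hK.finrank_eq
      ((mem_covers.mp hX).2.2.trans (by rw [hline]))
  simp only [Finset.sum_add_distrib, Finset.sum_const, ← Finset.mul_sum, hcovers, smul_eq_mul,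
    sum_card_richSolids hline] at hplanes
  exact three_mul_add_six_le hq hK.le_card hpoints (by linarith)

theorem IsLargeCap.card_pointsIn_plane (hq : 2 < q) (hK : IsLargeCap K)
    {r : Submodule F V} (hS : S ∈ richSolids K r) (hXS : X ≤ S) (hX : finrank F X = 3)
    (h2 : 2 ≤ (pointsIn K X).card) : (pointsIn K X).card = q + 1 := by
  obtain ⟨-, hS4, hcard⟩ := mem_richSolids.mp hS
  have := (hK.isOvoidIn hq hS4 hcard).card_pointsIn_plane X hXS hX
  rw [pointsIn_pointsIn_of_le hXS] at this
  exact this h2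

theorem IsLargeCap.exists_tangentPoint_notMem_secant (hq : 2 < q) (hK : IsLargeCap K)
    (hA : A ∈ K) (hB : B ∈ K) (hAB : A ≠ B) (hN : finrank F N = 1) (hNK : N ∉ K)
    (hNAB : N ≤ A ⊔ B) (hS : S ∈ richSolids K (A ⊔ B)) (hX : X ∈ covers (A ⊔ B) S) :
    ∃ P ∈ tangentPoints K N, P ≤ X ∧ ¬P ≤ A ⊔ B := by
  obtain ⟨hABX, hXS, hX3⟩ := mem_covers.mp hX
  rw [finrank_sup_of_points (hK.isPointCap.finrank_eq_one A hA)
    (hK.isPointCap.finrank_eq_one B hB) hAB] at hX3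
  have hKX := hK.card_pointsIn_plane hq hS hXS hX3 (by
    rw [← hK.isPointCap.card_pointsIn_secant hA hB hAB]
    exact Finset.card_le_card (pointsIn_mono hABX))
  have heven : Even q := Nat.even_iff.mpr
    (FiniteField.even_card_iff_char_two.mp (ringChar.eq F 2))
  obtain ⟨P, hP, hPX⟩ := hK.isPointCap.exists_tangentPoint_of_odd hN hNK (hNAB.trans hABX)
    (hKX ▸ heven.add_one)
  refine ⟨P, hP, hPX, fun hle => ?_⟩
  have hPAB := mem_pointsIn.mpr ⟨hP, hle⟩
  rw [hK.isPointCap.pointsIn_tangentPoints_secant hA hB hAB hN hNK hNAB] at hPAB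
  exact Finset.notMem_empty P hPAB

theorem IsLargeCap.not_onSecant_of_two_le (hq : 2 < q) (hK : IsLargeCap K) {r : Submodule F V}
    (hN : finrank F N = 1) (hNK : N ∉ K) (hS : S ∈ richSolids K r) (hXS : X ≤ S)
    (hX : finrank F X = 3) (h2 : 2 ≤ (pointsIn (tangentPoints K N) X).card) :
    (pointsIn K X).card = q + 1 ∧ ¬OnSecant (pointsIn K X) N := by
  classical
  have hsub : pointsIn (tangentPoints K N) X ⊆ pointsIn K X :=
    Finset.filter_subset_filter _ (tangentPoints_subset K N)
  have hKX := hK.card_pointsIn_plane hq hS hXS hX (h2.trans (Finset.card_le_card hsub))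
  refine ⟨hKX, fun hsec => ?_⟩
  have := hK.isPointCap.card_tangentPoints_plane_le hX hN hNK hsec
  omega

theorem IsLargeCap.exists_plane_not_onSecant (hq : 2 < q) (hK : IsLargeCap K)
    (hA : A ∈ K) (hB : B ∈ K) (hAB : A ≠ B) (hN : finrank F N = 1) (hNK : N ∉ K)
    (hNAB : N ≤ A ⊔ B) (hS : S ∈ richSolids K (A ⊔ B)) :
    ∃ X : Submodule F V, finrank F X = 3 ∧ N ≤ X ∧ (pointsIn K X).card = q + 1 ∧
      ¬OnSecant (pointsIn K X) N ∧ A ⊔ B ⊔ X = S := by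
  obtain ⟨hABS, hS4, -⟩ := mem_richSolids.mp hS
  have point {P} (hP : P ∈ tangentPoints K N) : finrank F P = 1 :=
    hK.isPointCap.finrank_eq_one P (tangentPoints_subset K N hP)
  have hline := finrank_sup_of_points (hK.isPointCap.finrank_eq_one A hA)
    (hK.isPointCap.finrank_eq_one B hB) hAB
  have hcovers := card_covers_two hABS (by rw [hS4, hline])
  obtain ⟨X₁, hX₁, X₂, hX₂, hne⟩ := Finset.one_lt_card.mp
    (by omega : 1 < (covers (A ⊔ B) S).card)
  obtain ⟨P₁, hP₁, hPX₁, -⟩ :=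
    hK.exists_tangentPoint_notMem_secant hq hA hB hAB hN hNK hNAB hS hX₁
  obtain ⟨P₂, hP₂, hPX₂, hPAB₂⟩ :=
    hK.exists_tangentPoint_notMem_secant hq hA hB hAB hN hNK hNAB hS hX₂
  obtain ⟨hABX₁, hXS₁, -⟩ := mem_covers.mp hX₁
  have hXS₂ := (mem_covers.mp hX₂).2.1
  have hP₂X₁ : ¬P₂ ≤ X₁ := fun hle => hne <|
    (sup_point_eq_of_mem_covers hX₁ (point hP₂) hPAB₂ hle).symm.trans
      (sup_point_eq_of_mem_covers hX₂ (point hP₂) hPAB₂ hPX₂)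
  have hNP₁ : N ≠ P₁ := fun h => hNK (h ▸ tangentPoints_subset K N hP₁)
  have hX3 : finrank F ↥(N ⊔ P₁ ⊔ P₂) = 3 := by
    rw [finrank_sup_point (point hP₂)
      fun hle => hP₂X₁ (hle.trans (sup_le (hNAB.trans hABX₁) hPX₁)),
      finrank_sup_of_points hN (point hP₁) hNP₁]
  have hXS : N ⊔ P₁ ⊔ P₂ ≤ S :=
    sup_le (sup_le (hNAB.trans hABS) (hPX₁.trans hXS₁)) (hPX₂.trans hXS₂)
  obtain ⟨hKX, hsec⟩ := hK.not_onSecant_of_two_le hq hN hNK hS hXS hX3 <|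
    Finset.one_lt_card.mpr ⟨P₁, mem_pointsIn.mpr ⟨hP₁, le_sup_right.trans le_sup_left⟩, P₂,
      mem_pointsIn.mpr ⟨hP₂, le_sup_right⟩, fun h => hP₂X₁ (h ▸ hPX₁)⟩
  have hABX : ¬A ⊔ B ≤ N ⊔ P₁ ⊔ P₂ := fun hle => hsec (OnSecant.pointsIn hA hB hAB hNAB hle)
  have hlt := Submodule.finrank_lt_finrank_of_lt (right_lt_sup.mpr hABX)
  exact ⟨_, hX3, le_sup_left.trans le_sup_left, hKX, hsec,
    Submodule.eq_of_le_of_finrank_le (sup_le hABS hXS) (by omega)⟩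

end RichSolidsThroughSecants

theorem two_mul_sum_card_add_le {ι α : Type*} [DecidableEq α] (f : ι → Finset α) (c : ℕ)
    (T : Finset ι) (hT : (T : Set ι).Pairwise fun x y => (f x ∩ f y).card ≤ c) :
    2 * ∑ x ∈ T, (f x).card + T.card * c ≤ 2 * (T.biUnion f).card + T.card ^ 2 * c := by
  classical
  induction T using Finset.induction_on with
  | empty => simp
  | insert a T ha ih =>
    have ih := ih (hT.mono (by simp))
    rw [Finset.sum_insert ha, Finset.biUnion_insert, Finset.card_insert_of_notMem ha]
    have hunion := Finset.card_union_add_card_inter (f a) (T.biUnion f)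
    have hinter : (f a ∩ T.biUnion f).card ≤ T.card * c := by
      rw [Finset.inter_biUnion]
      exact Finset.card_biUnion_le_card_mul _ _ _ fun x hx => hT (Finset.mem_insert_self a T)
        (Finset.mem_insert_of_mem hx) fun h => ha (h ▸ hx)
    nlinarith

section ExtendableSolids

variable {F V : Type*} [Field F] [Fintype F] [AddCommGroup V] [Module F V] [Finite V]
  {K : Finset (Submodule F V)} {N X Y Z : Submodule F V}

local notation "q" => Fintype.card F

/-- The solids through `N` that contain more than `(q² + q + 2) / 2` points of `K` and whose
section of `K` remains a cap when the point `N` outside `K` is added. A solid through `N` that is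
not of this kind satisfies `|τ| + |K| ≤ q² + q + 2` inside the solid, where `τ` is the set of
tangent points for `N`. -/
noncomputable def extendableSolids (K : Finset (Submodule F V)) (N : Submodule F V) :
    Finset (Submodule F V) :=
  (Set.toFinite {Y | N ≤ Y ∧ finrank F Y = 4 ∧ ¬OnSecant (pointsIn K Y) N ∧
    q ^ 2 + q + 2 < 2 * (pointsIn K Y).card}).toFinset

theorem mem_extendableSolids : Y ∈ extendableSolids K N ↔ N ≤ Y ∧ finrank F Y = 4 ∧
    ¬OnSecant (pointsIn K Y) N ∧ q ^ 2 + q + 2 < 2 * (pointsIn K Y).card := by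
  simp [extendableSolids]

theorem IsPointCap.card_pointsIn_inter_solids_le (hV : finrank F V = 5) (hK : IsPointCap K)
    (hY : finrank F Y = 4) (hZ : finrank F Z = 4) (hne : Y ≠ Z) :
    (pointsIn K Y ∩ pointsIn K Z).card ≤ q + 2 := by
  rw [pointsIn_inter_pointsIn]
  have := finrank_inf_add_one_of_ne (X := ⊤) (by rw [finrank_top, hV, hY])
    (by rw [finrank_top, hV, hZ]) le_top le_top hne
  exact hK.card_pointsIn_plane_le (by omega)

variable [CharP F 2]

theorem IsLargeCap.card_extendableSolids_le (hq : 16 ≤ q) (hK : IsLargeCap K)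
    (hN : finrank F N = 1) (hNK : N ∉ K) : (extendableSolids K N).card ≤ 4 := by
  by_contra! hlt
  obtain ⟨T, hT, hT5⟩ := Finset.exists_subset_card_eq (by omega : 5 ≤ (extendableSolids K N).card)
  have hunion := two_mul_sum_card_add_le (pointsIn K) (q + 2) T fun Y hY Z hZ hne =>
    hK.isPointCap.card_pointsIn_inter_solids_le hK.finrank_eq (mem_extendableSolids.mp (hT hY)).2.1
      (mem_extendableSolids.mp (hT hZ)).2.1 hne
  have htan : (T.biUnion (pointsIn K)).card ≤ (tangentPoints K N).card := by
    refine Finset.card_le_card (Finset.biUnion_subset.mpr fun Y hY => ?_)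
    obtain ⟨hNY, -, hsec, -⟩ := mem_extendableSolids.mp (hT hY)
    rw [← hK.isPointCap.pointsIn_tangentPoints_of_not_onSecant hN hNY hsec]
    exact pointsIn_subset _ Y
  have hsum : T.card • (q ^ 2 + q + 3) ≤ ∑ Y ∈ T, 2 * (pointsIn K Y).card :=
    Finset.card_nsmul_le_sum _ _ _ fun Y hY => (mem_extendableSolids.mp (hT hY)).2.2.2
  have hle := hK.card_tangentPoints_add_card_le hN hNK
  have hcard := hK.le_card
  rw [← Finset.mul_sum, smul_eq_mul] at hsum
  rw [hT5] at hunion hsum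
  nlinarith

theorem IsLargeCap.card_tangentPoints_solid_le (hq : 2 < q) (hK : IsLargeCap K)
    (hN : finrank F N = 1) (hNK : N ∉ K) (hY : finrank F Y = 4) (hNY : N ≤ Y) :
    (pointsIn (tangentPoints K N) Y).card + (pointsIn K Y).card
        + 3 * q * (if Y ∈ extendableSolids K N then 1 else 0)
      ≤ q ^ 2 + q + 2 + (q ^ 2 + 2) * if Y ∈ extendableSolids K N then 1 else 0 := by
  by_cases hsec : OnSecant (pointsIn K Y) N
  · have := hK.isPointCap.card_tangentPoints_solid_le hY hN hNK hsec
    rw [if_neg fun h => (mem_extendableSolids.mp h).2.2.1 hsec]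
    omega
  rw [hK.isPointCap.pointsIn_tangentPoints_of_not_onSecant hN hNY hsec]
  split_ifs with hmem
  · have : ¬q ^ 2 + 3 ≤ (pointsIn K Y).card + q := fun hrich => hsec <|
      (hK.isOvoidIn hq hY hrich).isCompleteIn N hN hNY fun h => hNK (pointsIn_subset K Y h)
    omega
  · have : ¬q ^ 2 + q + 2 < 2 * (pointsIn K Y).card := fun h =>
      hmem (mem_extendableSolids.mpr ⟨hNY, hY, hsec, h⟩)
    omega

theorem IsLargeCap.card_tangentPoints_le_of_plane (hq : 2 < q) (hK : IsLargeCap K)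
    (hN : finrank F N = 1) (hNK : N ∉ K) (hX : finrank F X = 3) (hNX : N ≤ X)
    (hKX : (pointsIn K X).card = q + 1) (hsec : ¬OnSecant (pointsIn K X) N)
    (hone : ((covers X ⊤).filter (· ∈ extendableSolids K N)).card ≤ 1) :
    (tangentPoints K N).card + K.card + 3 * q ≤ q ^ 3 + q ^ 2 + q + 4 := by
  have hcovers := card_covers_two (le_top (a := X)) (by rw [finrank_top, hK.finrank_eq, hX])
  have hpoints := sum_covers_card_pointsIn_add hK.isPointCap.finrank_eq_one (le_top (a := X))
  have htan := sum_covers_card_pointsIn_add (K := tangentPoints K N)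
    (fun P hP => hK.isPointCap.finrank_eq_one P (tangentPoints_subset K N hP)) (le_top (a := X))
  rw [pointsIn_top, hcovers, hKX] at hpoints
  rw [hK.isPointCap.pointsIn_tangentPoints_of_not_onSecant hN hNX hsec, pointsIn_top, hcovers,
    hKX] at htan
  have hsum := Finset.sum_le_sum fun Y (hY : Y ∈ covers X ⊤) =>
    hK.card_tangentPoints_solid_le hq hN hNK ((mem_covers.mp hY).2.2.trans (by rw [hX]))
      (hNX.trans (mem_covers.mp hY).1)
  simp only [Finset.sum_add_distrib, Finset.sum_const, ← Finset.mul_sum, ← Finset.card_filter,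
    hcovers, smul_eq_mul] at hsum
  interval_cases ((covers X ⊤).filter (· ∈ extendableSolids K N)).card <;> nlinarith

-- Every rich solid `S` on a secant `AB ∋ N` contains a plane `X` as in
-- `IsLargeCap.card_tangentPoints_le_of_plane`, unless two extendable solids `Y`, `Z` pass
-- through `X`. In that case `S = AB ⊔ (Y ⊓ Z)`, and there are at most 16 such pairs.
theorem IsLargeCap.card_tangentPoints_le (hq : 16 ≤ q) (hK : IsLargeCap K)
    (hN : finrank F N = 1) (hNK : N ∉ K) :
    (tangentPoints K N).card + K.card + 3 * q ≤ q ^ 3 + q ^ 2 + q + 4 := by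
  by_contra hcon
  obtain ⟨A, hA, B, hB, hAB, hle⟩ := hK.isCompleteIn N hN le_top hNK
  have hsub : richSolids K (A ⊔ B) ⊆ (extendableSolids K N ×ˢ extendableSolids K N).image
      fun p => A ⊔ B ⊔ p.1 ⊓ p.2 := by
    intro S hS
    obtain ⟨X, hX, hNX, hKX, hsec, rfl⟩ :=
      hK.exists_plane_not_onSecant (by omega) hA hB hAB hN hNK hle hS
    obtain ⟨Y, hY, Z, hZ, hne⟩ := Finset.one_lt_card.mp <| not_le.mp fun hone =>
      hcon (hK.card_tangentPoints_le_of_plane (by omega) hN hNK hX hNX hKX hsec hone)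
    obtain ⟨hXY, hY⟩ := Finset.mem_filter.mp hY
    obtain ⟨hXZ, hZ⟩ := Finset.mem_filter.mp hZ
    exact Finset.mem_image.mpr
      ⟨(Y, Z), Finset.mem_product.mpr ⟨hY, hZ⟩, by rw [inf_eq_of_mem_covers hXY hXZ hne]⟩
  have hpairs := (Finset.card_le_card hsub).trans Finset.card_image_le
  rw [Finset.card_product] at hpairs
  have hfour := hK.card_extendableSolids_le hq hN hNK
  have := Nat.mul_le_mul hfour hfour
  have := hK.le_card_richSolids hq hA hB hAB
  omega

end ExtendableSolids

-- `n` is the order of the field, `k = |K|`, `c` counts the points off `K`, and `t` the tangents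
-- at a point of `K`; `h` comes from counting the pairs of a tangent and a point of it off `K`.
theorem false_of_count {n k t c : ℤ} (hn : 16 ≤ n) (ht : 0 ≤ t) (hk : n ^ 3 + 4 * n ≤ k + n ^ 2)
    (htk : t + k = n ^ 3 + n ^ 2 + n + 2) (hck : c + k = n ^ 4 + n ^ 3 + n ^ 2 + n + 1)
    (h : k * (n * t) + c * (3 * n) ≤ c * (t + 2)) : False := by
  obtain rfl : k = n ^ 3 + n ^ 2 + n + 2 - t := by linarith
  obtain rfl : c = n ^ 4 - 1 + t := by linarith
  have ht_le : t ≤ 2 * n ^ 2 - 3 * n + 2 := by linarith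
  have hcoeff : 0 ≤ n ^ 3 - 2 * n ^ 2 - 6 * n + 3 := by
    nlinarith [mul_nonneg (sub_nonneg.mpr hn) (sq_nonneg n)]
  have hlower : t * (-(n ^ 3 - 2 * n ^ 2 - 6 * n + 3))
      ≤ t * (n ^ 3 + n ^ 2 + 5 * n - 1 - (n + 1) * t) :=
    mul_le_mul_of_nonneg_left (by nlinarith) ht
  have hupper := mul_le_mul_of_nonneg_right ht_le hcoeff
  have hpoly : (2 * n ^ 2 - 3 * n + 2) * (n ^ 3 - 2 * n ^ 2 - 6 * n + 3)
      < 3 * n ^ 5 - 2 * n ^ 4 - 3 * n + 2 := by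
    obtain ⟨m, rfl⟩ : ∃ m, n = m + 16 := ⟨n - 16, by ring⟩
    have hm : 0 ≤ m := by linarith
    rw [← sub_pos]
    ring_nf
    positivity
  linarith

section CountingTangents

variable {F V : Type*} [Field F] [Fintype F] [AddCommGroup V] [Module F V] [Finite V]
  {K : Finset (Submodule F V)} {P W : Submodule F V}

local notation "q" => Fintype.card F

theorem IsPointCap.mul_card_tangents_le (hK : IsPointCap K) (hP : P ∈ K) (hPW : P ≤ W) :
    q * (tangents K P W).card
      ≤ ((covers ⊥ W \ K).filter fun N => P ∈ tangentPoints K N).card := by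
  have hP1 := hK.finrank_eq_one P hP
  refine Finset.mul_card_image_le_card_of_maps_to (f := (P ⊔ ·)) (fun N hN => ?_) _ fun l hl => ?_
  · obtain ⟨hN, hPN⟩ := Finset.mem_filter.mp hN
    obtain ⟨hN, hNK⟩ := Finset.mem_sdiff.mp hN
    obtain ⟨hNW, hN1⟩ := mem_covers_bot.mp hN
    exact sup_mem_tangents hN1 (fun h => hNK (eq_of_point_le hN1 hP1 h ▸ hP)) hPW hNW hPN
  · obtain ⟨hlcov, hKl⟩ := mem_tangents.mp hl
    obtain ⟨hPl, hlW, hl2⟩ := mem_covers.mp hlcov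
    rw [hP1] at hl2
    have hq : ((covers ⊥ l).erase P).card = q := by
      rw [Finset.card_erase_of_mem (mem_covers_bot.mpr ⟨hPl, hP1⟩),
        card_covers_two bot_le (by rw [finrank_bot, hl2]), Nat.add_sub_cancel]
    refine hq.ge.trans (Finset.card_le_card fun N hN => ?_)
    obtain ⟨hNP, hN⟩ := Finset.mem_erase.mp hN
    obtain ⟨hNl, hN1⟩ := mem_covers_bot.mp hN
    have hline : P ⊔ N = l := line_eq_sup_of_points hP1 hN1 hl2.le hNP.symm hPl hNl
    have hNK : N ∉ K := fun h =>
      hNP (Finset.mem_singleton.mp (hKl ▸ mem_pointsIn.mpr ⟨h, hNl⟩))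
    simp only [Finset.mem_filter, Finset.mem_sdiff, mem_covers_bot]
    exact ⟨⟨⟨⟨hNl.trans hlW, hN1⟩, hNK⟩, mem_tangentPoints_iff_pointsIn_eq.mpr (hline ▸ hKl)⟩,
      hline⟩

theorem IsPointCap.card_tangents_top (hV : finrank F V = 5) (hK : IsPointCap K) (hP : P ∈ K) :
    (tangents K P ⊤).card + K.card = q ^ 3 + q ^ 2 + q + 2 := by
  have := hK.card_tangents_add_card_pointsIn hP le_top
  rwa [pointsIn_top, card_covers_four le_top
    (by rw [finrank_top, hV, hK.finrank_eq_one P hP])] at this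

theorem not_isLargeCap [CharP F 2] (hq : 16 ≤ q) : ¬IsLargeCap K := by
  intro hK
  have hcap := hK.isPointCap
  have htan := fun P (hP : P ∈ K) => hcap.card_tangents_top hK.finrank_eq hP
  have hcompl : (covers ⊥ ⊤ \ K).card + K.card = q ^ 4 + q ^ 3 + q ^ 2 + q + 1 := by
    rw [Finset.card_sdiff_add_card_eq_card fun P hP =>
      mem_covers_bot.mpr ⟨le_top, hcap.finrank_eq_one P hP⟩,
      card_covers_five le_top (by rw [finrank_top, hK.finrank_eq, finrank_bot])]
  have hcard := hK.le_card
  obtain ⟨P₀, hP₀⟩ := Finset.card_pos.mp (by nlinarith : 0 < K.card)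
  obtain ⟨t, ht⟩ : ∃ t, (tangents K P₀ ⊤).card = t := ⟨_, rfl⟩
  have ht₀ := htan P₀ hP₀
  have hlower : K.card * (q * t)
      ≤ ∑ P ∈ K, ((covers ⊥ ⊤ \ K).filter fun N => P ∈ tangentPoints K N).card := by
    refine Finset.card_nsmul_le_sum _ _ _ fun P hP => ?_
    have htP : (tangents K P ⊤).card = t := by have := htan P hP; omega
    exact htP ▸ hcap.mul_card_tangents_le hP le_top
  have hupper : ∑ N ∈ covers ⊥ ⊤ \ K, ((K.filter (· ∈ tangentPoints K N)).card + 3 * q)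
      ≤ (covers ⊥ ⊤ \ K).card * (t + 2) := by
    refine Finset.sum_le_card_nsmul _ _ _ fun N hN => ?_
    obtain ⟨hN, hNK⟩ := Finset.mem_sdiff.mp hN
    have := hK.card_tangentPoints_le hq (mem_covers_bot.mp hN).2 hNK
    rw [Finset.filter_mem_eq_inter, Finset.inter_eq_right.mpr (tangentPoints_subset K N)]
    omega
  have hswap := Finset.sum_card_bipartiteAbove_eq_sum_card_bipartiteBelow
    (s := covers ⊥ ⊤ \ K) (t := K) fun N P => P ∈ tangentPoints K N
  simp only [Finset.bipartiteAbove, Finset.bipartiteBelow] at hswap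
  rw [Finset.sum_add_distrib, Finset.sum_const, smul_eq_mul, hswap] at hupper
  zify at hq hcard ht₀ hcompl hlower hupper
  rw [ht] at ht₀
  exact false_of_count hq (Int.natCast_nonneg t) hcard ht₀ hcompl (by linarith)

end CountingTangents

theorem IsPointCap.card_add_sq_lt {F V : Type*} [Field F] [Fintype F] [CharP F 2]
    [AddCommGroup V] [Module F V] [Finite V] {K : Finset (Submodule F V)} (hK : IsPointCap K)
    (hV : finrank F V = 5) (hq : 16 ≤ Fintype.card F) :
    K.card + Fintype.card F ^ 2 < Fintype.card F ^ 3 + 4 * Fintype.card F := by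
  obtain ⟨L, hL, hKL, -, hcomplete⟩ := hK.exists_isCompleteIn (W := ⊤) fun _ _ => le_top
  by_contra! hle
  refine not_isLargeCap (K := L) hq ⟨hL, hcomplete, hV, hle.trans ?_⟩
  exact Nat.add_le_add_right (Finset.card_le_card hKL) _

theorem isPointCap_of_isCap {F : Type*} [Field F] {n : ℕ} {K : Set (PGPoint F n)} (hK : IsCap K)
    {L : Finset (Submodule F (Fin (n + 1) → F))} (hL : L = Projectivization.submodule '' K) :
    IsPointCap L := by
  have mem {P} : P ∈ L ↔ ∃ p ∈ K, p.submodule = P := by rw [← Finset.mem_coe, hL, Set.mem_image]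
  constructor
  · intro P hP
    obtain ⟨p, -, rfl⟩ := mem.mp hP
    exact p.finrank_submodule
  · intro A hA B hB C hC hAB hAC hBC hle
    obtain ⟨a, ha, rfl⟩ := mem.mp hA
    obtain ⟨b, hb, rfl⟩ := mem.mp hB
    obtain ⟨c, hc, rfl⟩ := mem.mp hC
    refine hK a ha b hb c hc (ne_of_apply_ne _ hAB) (ne_of_apply_ne _ hAC) (ne_of_apply_ne _ hBC) ?_
    rw [Coll3, sup_eq_left.mpr hle]
    exact finrank_sup_of_points_le a.finrank_submodule b.finrank_submodule

theorem ncard_add_sq_lt {F : Type*} [Field F] [Fintype F] [CharP F 2]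
    (hq : 16 ≤ Fintype.card F) {K : Set (PGPoint F 4)} (hK : IsCap K) :
    K.ncard + Fintype.card F ^ 2 < Fintype.card F ^ 3 + 4 * Fintype.card F := by
  have hfin : (Projectivization.submodule '' K).Finite := Set.toFinite _
  rw [← Set.ncard_image_of_injective K Projectivization.submodule_injective,
    Set.ncard_eq_toFinset_card _ hfin]
  exact (isPointCap_of_isCap hK hfin.coe_toFinset).card_add_sq_lt (by simp) hq

theorem charP_two_of_even_card {F : Type*} [Field F] [Fintype F] (h : Even (Fintype.card F)) :
    CharP F 2 :=
  ringChar.of_eq (FiniteField.even_card_iff_char_two.mpr (Nat.even_iff.mp h))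

theorem sixteen_le_card {F : Type*} [Field F] [Fintype F] [CharP F 2] (hq : 8 < Fintype.card F) :
    16 ≤ Fintype.card F := by
  obtain ⟨n, -, hn⟩ := FiniteField.card F 2
  rw [hn] at hq ⊢
  have hn3 : 3 < (n : ℕ) := (Nat.pow_lt_pow_iff_right one_lt_two).mp (by simpa using hq)
  exact Nat.pow_le_pow_right two_pos hn3

end CapBound

theorem stmt10 (F : Type*) [Field F] [Fintype F] (q : ℕ) (hcard : Fintype.card F = q)
    (hqeven : Even q) (hq : 8 < q)
    (K : Set (PGPoint F 4)) (hK : IsCap K) :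
    (K.ncard : ℝ) < (q : ℝ) ^ 3 - (q : ℝ) ^ 2 + 2 * Real.sqrt 5 * (q : ℝ) - 8 := by
  subst hcard
  have := CapBound.charP_two_of_even_card hqeven
  have hq16 := CapBound.sixteen_le_card hq
  have hbound : K.ncard + Fintype.card F ^ 2 + 1 ≤ Fintype.card F ^ 3 + 4 * Fintype.card F :=
    CapBound.ncard_add_sq_lt hq16 hK
  rify at hq16 hbound
  have hsqrt : 2.23 < Real.sqrt 5 := Real.lt_sqrt_of_sq_lt (by norm_num)
  nlinarith
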